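/- arXiv:math/0202288 — 6 statements merged into one kernel-verified Lean document; each statement's English description precedes it below -/
import Mathlib

section
/- The ℂ-algebra homomorphism ℂ[b,q,r₁,r₂] → B/I sending b ↦ b, q ↦ q, r₁ ↦ r_{2,1}, r₂ ↦ r_{2,2} is surjective, and its kernel is the ideal (q(r₁+r₂−4b)) + (the three components of R_{n+1}); that is, it induces an isomorphism of ℂ-algebras ℂ[b,q,r₁,r₂]/(q(r₁+r₂−4b), R_{n+1}) ≅ B/I. -/
open MvPolynomial

noncomputable section

/-! We write `n = m + 2` (so that `n ≥ 2` ranges over all allowed values as `m` ranges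
over `ℕ`).  The polynomial ring `B` in `3n − 1` variables has index type
`Fin 2 ⊕ (Fin (m+1) × Fin 3)`: `Sum.inl 0 = b`, `Sum.inl 1 = q`, and `Sum.inr (k, j)` is
the `j`-th component of `r̂_{k+2} = (b_{k+2}, r_{k+2,1}, r_{k+2,2})ᵀ`. -/

/-- The polynomial ring `B = ℂ[b, q, b₂,…,b_n, (r_{ν,1}, r_{ν,2})]` in `3n − 1`
variables, `n = m + 2`. -/
abbrev B (m : ℕ) : Type := MvPolynomial (Fin 2 ⊕ (Fin (m + 1) × Fin 3)) ℂ

variable (m : ℕ)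

/-- The variable `b`. -/
def bB : B m := X (Sum.inl 0)

/-- The variable `q`. -/
def qB : B m := X (Sum.inl 1)

/-- The vector `r̂_{k+2} = (b_{k+2}, r_{k+2,1}, r_{k+2,2})ᵀ` of variables. -/
def rhat (k : Fin (m + 1)) (j : Fin 3) : B m := X (Sum.inr (k, j))

/-- The 3×3 matrix `Ê` over `B`, with rows `(b, 2q, 2q)`, `(1, r_{2,1}−b, 0)`,
`(1, 0, r_{2,2}−b)`. -/
def Ehat : Matrix (Fin 3) (Fin 3) (B m) :=
  !![bB m, 2 * qB m, 2 * qB m;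
     1, rhat m 0 1 - bB m, 0;
     1, 0, rhat m 0 2 - bB m]

/-- The ideal `I ⊆ B` generated by `b₂ − b² − 4q`, `q(r_{2,1}+r_{2,2}−4b)`, the three
components of `r̂_{ν+1} − Ê·r̂_ν` for `2 ≤ ν ≤ n−1`, and the three components of
`Ê·r̂_n`. -/
def IB : Ideal (B m) :=
  Ideal.span
    ({rhat m 0 0 - bB m ^ 2 - 4 * qB m,
       qB m * (rhat m 0 1 + rhat m 0 2 - 4 * bB m)} ∪
      (Set.range fun p : Fin m × Fin 3 =>
        rhat m p.1.succ p.2 - (Ehat m).mulVec (rhat m p.1.castSucc) p.2) ∪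
      (Set.range fun j : Fin 3 => (Ehat m).mulVec (rhat m (Fin.last m)) j))

/-- `ℂ[b,q,r₁,r₂]`, with variables `0 = b`, `1 = q`, `2 = r₁`, `3 = r₂`. -/
abbrev P4 : Type := MvPolynomial (Fin 4) ℂ

/-- The 3×3 matrix `E` over `ℂ[b,q,r₁,r₂]`, with rows `(b,2q,2q)`, `(1,r₁−b,0)`,
`(1,0,r₂−b)`. -/
def E3 : Matrix (Fin 3) (Fin 3) P4 :=
  !![X 0, 2 * X 1, 2 * X 1;
     1, X 2 - X 0, 0;
     1, 0, X 3 - X 0]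

/-- `R_{n+1} = Eⁿ·(b,1,1)ᵀ`. -/
def Rv (n : ℕ) : Fin 3 → P4 := (E3 ^ n).mulVec ![X 0, 1, 1]

/-- The `ℂ`-algebra homomorphism `ℂ[b,q,r₁,r₂] → B/I` sending `b ↦ b`, `q ↦ q`,
`r₁ ↦ r_{2,1}`, `r₂ ↦ r_{2,2}`. -/
def ψ : P4 →ₐ[ℂ] (B m ⧸ IB m) :=
  aeval ![Ideal.Quotient.mk (IB m) (bB m), Ideal.Quotient.mk (IB m) (qB m),
    Ideal.Quotient.mk (IB m) (rhat m 0 1), Ideal.Quotient.mk (IB m) (rhat m 0 2)]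

/-!
Substituting `R_ν` for `r̂_ν` gives a surjection `ε : B → ℂ[b,q,r₁,r₂]`. The relations
`b₂ = b² + 4q` and `r̂_{ν+1} = Ê r̂_ν` say that `r̂_ν = R_ν` in `B/I`, so `ψ ∘ ε` is the
quotient map. Hence `ψ` is surjective and `ker ψ = ε(I)`. Now `ε` kills these relations and
sends the remaining generators of `I` to `q(r₁+r₂−4b)` and the components of `E R_n = R_{n+1}`.
-/

lemma ker_eq_map_ker_comp_of_surjective {R S T : Type*} [Semiring R] [Semiring S]
    [Semiring T] (g : S →+* T) {f : R →+* S} (hf : Function.Surjective f) :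
    RingHom.ker g = (RingHom.ker (g.comp f)).map f := by
  rw [← RingHom.comap_ker, Ideal.map_comap_of_surjective f hf]

lemma Rv_succ (n : ℕ) : Rv (n + 1) = E3.mulVec (Rv n) := by
  simp only [Rv, pow_succ', Matrix.mulVec_mulVec]

lemma Rv_one : Rv 1 = ![X 0 ^ 2 + 4 * X 1, X 2, X 3] := by
  have hfirst : (X 0 * X 0 + 2 * X 1 + 2 * X 1 : P4) = X 0 ^ 2 + 4 * X 1 := by ring
  ext1 j
  fin_cases j <;> simp [Rv, E3, Matrix.mulVec, dotProduct, Fin.sum_univ_three, hfirst]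

/-- The `ℂ`-algebra homomorphism `ε : B → ℂ[b,q,r₁,r₂]` eliminating the variables `r̂_ν` by
`r̂_ν ↦ R_ν`. Since `rhat m k` is `r̂_{k+2}` and `Rv n` is `R_{n+1}`, it sends `rhat m k` to
`Rv (k + 1)`. -/
def elimHom : B m →ₐ[ℂ] P4 :=
  aeval (Sum.elim ![X 0, X 1] fun p => Rv (p.1 + 1) p.2)

@[simp] lemma elimHom_bB : elimHom m (bB m) = X 0 := by simp [elimHom, bB]

@[simp] lemma elimHom_qB : elimHom m (qB m) = X 1 := by simp [elimHom, qB]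

@[simp] lemma elimHom_rhat (k : Fin (m + 1)) (j : Fin 3) :
    elimHom m (rhat m k j) = Rv (k + 1) j := by
  simp [elimHom, rhat]

lemma elimHom_comp_rhat (k : Fin (m + 1)) : elimHom m ∘ rhat m k = Rv (k + 1) :=
  funext (elimHom_rhat m k)

lemma elimHom_surjective : Function.Surjective (elimHom m) := by
  have hsection : (elimHom m).comp (aeval ![bB m, qB m, rhat m 0 1, rhat m 0 2]) =
      AlgHom.id ℂ P4 := by
    ext1 i
    fin_cases i <;> simp [Rv_one]
  exact Function.RightInverse.surjective (DFunLike.congr_fun hsection)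

lemma Ehat_map_elimHom : (Ehat m).map (elimHom m) = E3 := by
  ext1 i j
  fin_cases i <;> fin_cases j <;> simp [Ehat, E3, Rv_one, map_ofNat]

lemma elimHom_Ehat_mulVec_rhat (k : Fin (m + 1)) (j : Fin 3) :
    elimHom m ((Ehat m).mulVec (rhat m k) j) = Rv (k + 2) j :=
  calc elimHom m ((Ehat m).mulVec (rhat m k) j)
      = ((Ehat m).map (elimHom m)).mulVec (elimHom m ∘ rhat m k) j :=
        RingHom.map_mulVec (elimHom m).toRingHom _ _ j
    _ = E3.mulVec (Rv (k + 1)) j := by rw [Ehat_map_elimHom, elimHom_comp_rhat]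
    _ = Rv (k + 2) j := by rw [Rv_succ (k + 1)]

lemma map_elimHom_IB :
    (IB m).map (elimHom m) =
      Ideal.span ({X 1 * (X 2 + X 3 - 4 * X 0)} ∪ Set.range (Rv (m + 2))) := by
  have hb : elimHom m (rhat m 0 0 - bB m ^ 2 - 4 * qB m) = 0 := by
    simp [Rv_one, map_ofNat]
  have hq : elimHom m (qB m * (rhat m 0 1 + rhat m 0 2 - 4 * bB m)) =
      X 1 * (X 2 + X 3 - 4 * X 0) := by
    simp [Rv_one, map_ofNat]
  have hrec (p : Fin m × Fin 3) :
      elimHom m (rhat m p.1.succ p.2 - (Ehat m).mulVec (rhat m p.1.castSucc) p.2) = 0 := by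
    simp [elimHom_Ehat_mulVec_rhat]
  have hlast (j : Fin 3) :
      elimHom m ((Ehat m).mulVec (rhat m (Fin.last m)) j) = Rv (m + 2) j := by
    simp [elimHom_Ehat_mulVec_rhat]
  have hrec_span : Ideal.span (Set.range fun _ : Fin m × Fin 3 => (0 : P4)) = ⊥ :=
    Ideal.span_eq_bot.mpr fun _ ⟨_, h⟩ => h.symm
  rw [IB, Ideal.map_span, Set.image_union, Set.image_union, Set.image_pair, ← Set.range_comp,
    ← Set.range_comp]
  simp only [Function.comp_def, hb, hq, hrec, hlast, Ideal.span_union, Ideal.span_insert_zero,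
    hrec_span, sup_bot_eq]

lemma mk_rhat_zero_zero :
    Ideal.Quotient.mk (IB m) (rhat m 0 0) = Ideal.Quotient.mk (IB m) (bB m ^ 2 + 4 * qB m) := by
  rw [Ideal.Quotient.eq, ← sub_sub]
  exact Ideal.subset_span (Or.inl (Or.inl (Or.inl rfl)))

lemma mk_rhat_succ (k : Fin m) (j : Fin 3) :
    Ideal.Quotient.mk (IB m) (rhat m k.succ j) =
      Ideal.Quotient.mk (IB m) ((Ehat m).mulVec (rhat m k.castSucc) j) :=
  Ideal.Quotient.eq.mpr (Ideal.subset_span (Or.inl (Or.inr ⟨(k, j), rfl⟩)))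

lemma ψ_X (i : Fin 4) :
    ψ m (X i) = Ideal.Quotient.mk (IB m) (![bB m, qB m, rhat m 0 1, rhat m 0 2] i) := by
  fin_cases i <;> simp [ψ]

lemma E3_map_ψ : E3.map (ψ m) = (Ehat m).map (Ideal.Quotient.mk (IB m)) := by
  ext1 i j
  fin_cases i <;> fin_cases j <;> simp [Ehat, E3, ψ_X, map_ofNat]

lemma ψ_comp_Rv (k : Fin (m + 1)) :
    ψ m ∘ Rv (k + 1) = Ideal.Quotient.mk (IB m) ∘ rhat m k := by
  induction k using Fin.induction with
  | zero =>
    ext1 j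
    fin_cases j <;> simp [Rv_one, ψ_X, mk_rhat_zero_zero, map_ofNat]
  | succ k ih =>
    rw [Fin.val_castSucc] at ih
    ext1 j
    calc ψ m (Rv (k + 1 + 1) j)
        = ψ m (E3.mulVec (Rv (k + 1)) j) := by rw [Rv_succ (k + 1)]
      _ = (E3.map (ψ m)).mulVec (ψ m ∘ Rv (k + 1)) j :=
          RingHom.map_mulVec (ψ m).toRingHom _ _ j
      _ = ((Ehat m).map (Ideal.Quotient.mk (IB m))).mulVec
            (Ideal.Quotient.mk (IB m) ∘ rhat m k.castSucc) j := by rw [E3_map_ψ, ih]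
      _ = Ideal.Quotient.mk (IB m) ((Ehat m).mulVec (rhat m k.castSucc) j) :=
          (RingHom.map_mulVec _ _ _ j).symm
      _ = Ideal.Quotient.mk (IB m) (rhat m k.succ j) := (mk_rhat_succ m k j).symm

lemma ψ_comp_elimHom : (ψ m).comp (elimHom m) = Ideal.Quotient.mkₐ ℂ (IB m) := by
  refine MvPolynomial.algHom_ext ?_
  rintro (i | ⟨k, j⟩)
  · fin_cases i
    · exact (congrArg (ψ m) (elimHom_bB m)).trans (ψ_X m 0)
    · exact (congrArg (ψ m) (elimHom_qB m)).trans (ψ_X m 1)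
  · exact (congrArg (ψ m) (elimHom_rhat m k j)).trans (congrFun (ψ_comp_Rv m k) j)

/-- For `n = m + 2 ≥ 2`, the `ℂ`-algebra homomorphism
`ℂ[b,q,r₁,r₂] → B/I` (`b ↦ b`, `q ↦ q`, `r₁ ↦ r_{2,1}`, `r₂ ↦ r_{2,2}`) is surjective
and its kernel is the ideal `(q(r₁+r₂−4b), R_{n+1})`; that is, it induces an isomorphism
`ℂ[b,q,r₁,r₂]/(q(r₁+r₂−4b), R_{n+1}) ≅ B/I`. -/
theorem stmt10 (m : ℕ) :
    Function.Surjective (ψ m) ∧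
    RingHom.ker (ψ m) =
      Ideal.span ({X 1 * (X 2 + X 3 - 4 * X 0)} ∪ Set.range (Rv (m + 2))) := by
  constructor
  · have hsurj : Function.Surjective (ψ m ∘ elimHom m) := by
      rw [← AlgHom.coe_comp, ψ_comp_elimHom]
      exact Ideal.Quotient.mkₐ_surjective ℂ (IB m)
    exact hsurj.of_comp
  · calc RingHom.ker (ψ m)
        = (RingHom.ker ((ψ m).comp (elimHom m))).map (elimHom m) :=
          ker_eq_map_ker_comp_of_surjective (ψ m).toRingHom (elimHom_surjective m)
      _ = (RingHom.ker (Ideal.Quotient.mkₐ ℂ (IB m))).map (elimHom m) := by rw [ψ_comp_elimHom]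
      _ = (IB m).map (elimHom m) :=
          congrArg (Ideal.map (elimHom m)) (Ideal.Quotient.mkₐ_ker ℂ (IB m))
      _ = Ideal.span ({X 1 * (X 2 + X 3 - 4 * X 0)} ∪ Set.range (Rv (m + 2))) :=
          map_elimHom_IB m

end
end

section
/- For every integer n ≥ 1, the only common zero in ℂ³ of the three polynomials u_{n+1}, v_{n+1}, w_{n+1} is the origin: if (β,θ,κ) ∈ ℂ³ satisfies u_{n+1}(β,θ,κ) = v_{n+1}(β,θ,κ) = w_{n+1}(β,θ,κ) = 0, then β = θ = κ = 0. -/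
open MvPolynomial

noncomputable section

/-- `ℂ[b,t,k]`, with variables `0 = b`, `1 = t`, `2 = k`. -/
abbrev R3 : Type := MvPolynomial (Fin 3) ℂ

/-- The 3×3 matrix `A` with rows `(b,0,0)`, `(1,0,k)`, `(0,1,t)`. -/
def A3 : Matrix (Fin 3) (Fin 3) R3 :=
  !![X 0, 0, 0;
     1, 0, X 2;
     0, 1, X 1]

/-- `G₁ = (b(2b−t), 2b−t, 2)ᵀ`. -/
def G1 : Fin 3 → R3 := ![X 0 * (2 * X 0 - X 1), 2 * X 0 - X 1, 2]

/-- `G_{n+1} = Aⁿ·G₁`, with components `u_{n+1}, v_{n+1}, w_{n+1}`. -/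
def G (n : ℕ) : Fin 3 → R3 := (A3 ^ n).mulVec G1

/-! Over any reduced commutative ring in which `2` is not a zero divisor, the first component of
`Aⁿ G₁` is `bⁿ u₁`, so its vanishing forces `u₁ = 0`. The other two components then evolve by the
companion matrix of `x² - t x - k`, whose determinant is `-k`; since `w₁ = 2` is not a zero divisor,
Cramer's rule gives `k = 0`. For `k = 0` the square of the companion matrix is `t` times itself,
which leaves the equations `b (2b - t) = 0` and `t (2b + t) = 0`, with only the trivial solution. -/

section

open scoped Matrix

theorem mul_eq_zero_of_pow_mul_eq_zero {M : Type*} [CommMonoidWithZero M] [IsReduced M]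
    {a c : M} {n : ℕ} (h : a ^ n * c = 0) : a * c = 0 :=
  eq_zero_of_pow_eq_zero (n := n + 1) <| by
    rw [mul_pow, pow_succ a, pow_succ' c, mul_mul_mul_comm, h, zero_mul]

variable {R : Type*} [CommRing R]

/-- The companion matrix of `x² - t x - k`; it is the lower right block of `A`. -/
def quadraticCompanion (t k : R) : Matrix (Fin 2) (Fin 2) R :=
  !![0, k;
     1, t]

theorem det_quadraticCompanion (t k : R) : (quadraticCompanion t k).det = -k := by
  simp [quadraticCompanion, Matrix.det_fin_two]

theorem quadraticCompanion_zero_pow_succ (t : R) (n : ℕ) :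
    quadraticCompanion t 0 ^ (n + 1) = t ^ n • quadraticCompanion t 0 := by
  have sq_eq : quadraticCompanion t 0 * quadraticCompanion t 0 = t • quadraticCompanion t 0 := by
    ext i j
    fin_cases i <;> fin_cases j <;> simp [quadraticCompanion]
  induction n with
  | zero => simp
  | succ n ih => rw [pow_succ, ih, smul_mul_assoc, sq_eq, smul_smul, pow_succ]

/-- The matrix `A`, with entries in an arbitrary commutative ring. -/
def matrixA (b t k : R) : Matrix (Fin 3) (Fin 3) R :=
  !![b, 0, 0;
     1, 0, k;
     0, 1, t]

/-- The vector `G₁`, with entries in an arbitrary commutative ring. -/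
def vectorG1 (b t : R) : Fin 3 → R := ![b * (2 * b - t), 2 * b - t, 2]

theorem matrixA_pow_mulVec_apply_zero (b t k : R) (n : ℕ) (x : Fin 3 → R) :
    (matrixA b t k ^ n *ᵥ x) 0 = b ^ n * x 0 := by
  have mulVec_apply_zero (y : Fin 3 → R) : (matrixA b t k *ᵥ y) 0 = b * y 0 := by
    simp [matrixA, Matrix.mulVec, dotProduct, Fin.sum_univ_three]
  induction n with
  | zero => simp
  | succ n ih => rw [pow_succ', ← Matrix.mulVec_mulVec, mulVec_apply_zero, ih, pow_succ', mul_assoc]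

theorem matrixA_pow_mulVec_vecCons_zero (b t k : R) (n : ℕ) (y : Fin 2 → R) :
    matrixA b t k ^ n *ᵥ Matrix.vecCons 0 y =
      Matrix.vecCons 0 (quadraticCompanion t k ^ n *ᵥ y) := by
  have mulVec_vecCons_zero (z : Fin 2 → R) : matrixA b t k *ᵥ Matrix.vecCons 0 z =
      Matrix.vecCons 0 (quadraticCompanion t k *ᵥ z) := by
    ext i
    fin_cases i <;> simp [matrixA, quadraticCompanion, Matrix.mulVec, dotProduct, Fin.sum_univ_succ]
  induction n with
  | zero => simp
  | succ n ih =>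
    rw [pow_succ', ← Matrix.mulVec_mulVec, ih, mulVec_vecCons_zero, Matrix.mulVec_mulVec,
      ← pow_succ']

theorem eq_zero_of_quadraticCompanion_pow_mulVec_eq_zero [IsReduced R] {t k : R} {n : ℕ}
    {y : Fin 2 → R} {i : Fin 2} (hy : y i ∈ nonZeroDivisors R)
    (h : quadraticCompanion t k ^ n *ᵥ y = 0) : k = 0 := by
  have det_pow_eq_zero : (-k) ^ n = 0 := by
    rw [← det_quadraticCompanion t k, ← Matrix.det_pow]
    exact Matrix.det_eq_zero_of_mulVec_eq_zero_of_mem_nonZeroDivisors h hy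
  exact neg_eq_zero.mp (eq_zero_of_pow_eq_zero det_pow_eq_zero)

theorem mul_eq_zero_of_quadraticCompanion_zero_pow_mulVec_eq_zero [IsReduced R] {t : R} {n : ℕ}
    {y : Fin 2 → R} (h : quadraticCompanion t 0 ^ n *ᵥ y = 0) : t * (y 0 + t * y 1) = 0 := by
  have succ_eq_zero : quadraticCompanion t 0 ^ (n + 1) *ᵥ y = 0 := by
    rw [pow_succ', ← Matrix.mulVec_mulVec, h, Matrix.mulVec_zero]
  rw [quadraticCompanion_zero_pow_succ] at succ_eq_zero
  apply mul_eq_zero_of_pow_mul_eq_zero (n := n)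
  simpa [quadraticCompanion, Matrix.mulVec, dotProduct, mul_add, mul_assoc] using
    congrFun succ_eq_zero 1

theorem eq_zero_of_mul_sub_eq_zero_of_mul_add_eq_zero [IsReduced R]
    (h2 : 2 ∈ nonZeroDivisors R) {b t : R} (hb : b * (2 * b - t) = 0) (ht : t * (2 * b + t) = 0) :
    b = 0 ∧ t = 0 := by
  have b_eq_zero : b = 0 := by
    have cube_eq_zero : (2 * b) ^ 3 = 0 := by linear_combination b * ht + (4 * b + t) * hb
    exact (mul_left_mem_nonZeroDivisors_eq_zero_iff h2).mp (eq_zero_of_pow_eq_zero cube_eq_zero)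
  have t_sq_eq_zero : t ^ 2 = 0 := by linear_combination ht - 2 * t * b_eq_zero
  exact ⟨b_eq_zero, eq_zero_of_pow_eq_zero t_sq_eq_zero⟩

theorem stmt11_general [IsReduced R] (h2 : 2 ∈ nonZeroDivisors R) (n : ℕ) (b t k : R)
    (h : matrixA b t k ^ n *ᵥ vectorG1 b t = 0) : b = 0 ∧ t = 0 ∧ k = 0 := by
  have hb : b * (2 * b - t) = 0 := by
    have pow_mul_eq_zero : b ^ n * (b * (2 * b - t)) = 0 :=
      (matrixA_pow_mulVec_apply_zero b t k n (vectorG1 b t)).symm.trans (congrFun h 0)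
    exact mul_eq_zero_of_pow_mul_eq_zero (n := n + 1) (by rwa [pow_succ, mul_assoc])
  have block_eq_zero : quadraticCompanion t k ^ n *ᵥ ![2 * b - t, 2] = 0 := by
    rw [vectorG1, hb, matrixA_pow_mulVec_vecCons_zero] at h
    exact (Matrix.cons_eq_zero_iff.mp h).2
  obtain rfl : k = 0 :=
    eq_zero_of_quadraticCompanion_pow_mulVec_eq_zero (i := 1) h2 block_eq_zero
  have ht : t * (2 * b + t) = 0 := by
    have t_mul_eq_zero : t * ((2 * b - t) + t * 2) = 0 :=
      mul_eq_zero_of_quadraticCompanion_zero_pow_mulVec_eq_zero block_eq_zero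
    linear_combination t_mul_eq_zero
  obtain ⟨b_eq_zero, t_eq_zero⟩ := eq_zero_of_mul_sub_eq_zero_of_mul_add_eq_zero h2 hb ht
  exact ⟨b_eq_zero, t_eq_zero, rfl⟩

theorem eval_G (β θ κ : ℂ) (n : ℕ) (j : Fin 3) :
    eval ![β, θ, κ] (G n j) = (matrixA β θ κ ^ n *ᵥ vectorG1 β θ) j := by
  have map_A3 : A3.map (eval ![β, θ, κ]) = matrixA β θ κ := by
    ext i l
    fin_cases i <;> fin_cases l <;> simp [A3, matrixA]
  have map_G1 : eval ![β, θ, κ] ∘ G1 = vectorG1 β θ := by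
    ext i
    fin_cases i <;> simp [G1, vectorG1]
  rw [G, RingHom.map_mulVec, Matrix.map_pow, map_A3, map_G1]

end

/-- For every `n ≥ 1`, the only common zero in `ℂ³` of the three
polynomials `u_{n+1}, v_{n+1}, w_{n+1}` (the components of `G_{n+1} = Aⁿ·G₁`) is the
origin. -/
theorem stmt11 (n : ℕ) (hn : 1 ≤ n) (β θ κ : ℂ)
    (h : ∀ j : Fin 3, eval ![β, θ, κ] (G n j) = 0) :
    β = 0 ∧ θ = 0 ∧ κ = 0 :=
  stmt11_general (mem_nonZeroDivisors_of_ne_zero two_ne_zero) n β θ κ <|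
    funext fun j => by rw [← eval_G, h j, Pi.zero_apply]

end
end

section
/- For every integer n ≥ 1, the three polynomials u_{n+1}, v_{n+1}, w_{n+1} form a regular sequence in ℂ[b,t,k], and the quotient ℂ[b,t,k]/(u_{n+1}, v_{n+1}, w_{n+1}) is a finite-dimensional ℂ-vector space. -/
open MvPolynomial

noncomputable section

/-!
Since `u_{n+1} = b^{n+1} (2b - t)`, filtering the quotient by this product reduces weak regularity
to that of `(v, w)` on the planes `b = 0` and `t = 2b`. There `u` vanishes, so `v_{n+2} = k w_{n+1}`
and `w_{n+2} = v_{n+1} + t w_{n+1}`; this recurrence preserves coprimality because the prime `k`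
never divides `w`, as `w_{n+2} ≡ tⁿ (2b + t)` modulo `k`. The same congruence shows that `b`, `t`
and `k` vanish wherever `u`, `v` and `w` all do, so the variables are nilpotent in the quotient,
which is therefore finite.
-/

open RingTheory.Sequence Function
open scoped Pointwise

section WeaklyRegular

variable {R M M₁ M₂ M₃ : Type*} [CommRing R] [AddCommGroup M] [Module R M]
  [AddCommGroup M₁] [Module R M₁] [AddCommGroup M₂] [Module R M₂] [AddCommGroup M₃] [Module R M₃]

theorem isWeaklyRegular_of_shortExact {rs : List R} {f : M₁ →ₗ[R] M₂} {g : M₂ →ₗ[R] M₃}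
    (hf : Injective f) (hfg : Exact f g) (hg : Surjective g)
    (h₁ : IsWeaklyRegular M₁ rs) (h₃ : IsWeaklyRegular M₃ rs) : IsWeaklyRegular M₂ rs := by
  induction h₁ generalizing M₂ M₃ with
  | nil => exact .nil R M₂
  | @cons M _ _ r rs hr _ ih =>
    rw [isWeaklyRegular_cons_iff] at h₃
    have hf_exact : Exact (0 : M →ₗ[R] M) f := (f.exact_zero_iff_injective M).mpr hf
    have hf_mod : Injective (QuotSMulTop.map r f) := by
      rw [← LinearMap.exact_zero_iff_injective (QuotSMulTop r M), ← map_zero (QuotSMulTop.map r)]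
      exact QuotSMulTop.map_first_exact_on_four_term_exact_of_isSMulRegular_last hf_exact hfg h₃.1
    exact .cons (isSMulRegular_of_range_eq_ker hf hfg.linearMap_ker_eq.symm hr h₃.1)
      (ih hf_mod (QuotSMulTop.map_exact r hfg hg) (QuotSMulTop.map_surjective r hg) h₃.2)

-- The outer terms of `0 → M/xM → M/xyM → M/yM → 0` (multiplication by `y`, then projection) are
-- weakly regular for `rs`, hence so is the middle one.
theorem isWeaklyRegular_mul_cons {x y : R} {rs : List R}
    (hx : IsWeaklyRegular M (x :: rs)) (hy : IsWeaklyRegular M (y :: rs)) :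
    IsWeaklyRegular M ((x * y) :: rs) := by
  rw [isWeaklyRegular_cons_iff] at hx hy ⊢
  have hsmul (m : M) : (x * y) • m = y • x • m := by rw [mul_comm, mul_smul]
  have hle : x • ⊤ ≤ ((x * y) • (⊤ : Submodule R M)).comap (LinearMap.lsmul R M y) := by
    rintro _ ⟨m, -, rfl⟩
    exact ⟨m, trivial, hsmul m⟩
  have hle' : (x * y) • ⊤ ≤ y • (⊤ : Submodule R M) := by
    rintro _ ⟨m, -, rfl⟩
    exact ⟨x • m, trivial, (hsmul m).symm⟩
  let f : QuotSMulTop x M →ₗ[R] QuotSMulTop (x * y) M :=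
    Submodule.mapQ _ _ (LinearMap.lsmul R M y) hle
  let g : QuotSMulTop (x * y) M →ₗ[R] QuotSMulTop y M := Submodule.factor hle'
  refine ⟨hx.1.mul hy.1, isWeaklyRegular_of_shortExact (f := f) (g := g) ?_ ?_
    (Submodule.factor_surjective hle') hx.2 hy.2⟩
  · refine (injective_iff_map_eq_zero f).mpr
      ((Submodule.mkQ_surjective _).forall.mpr fun m hm => ?_)
    obtain ⟨a, -, ha⟩ := (Submodule.Quotient.mk_eq_zero _).mp hm
    exact (Submodule.Quotient.mk_eq_zero _).mpr
      ⟨a, trivial, hy.1 ((hsmul a).symm.trans ha)⟩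
  · refine (Submodule.mkQ_surjective _).forall.mpr fun m => ⟨fun hm => ?_, ?_⟩
    · obtain ⟨a, -, rfl⟩ := (Submodule.Quotient.mk_eq_zero _).mp hm
      exact ⟨Submodule.Quotient.mk a, rfl⟩
    · rintro ⟨a', ha⟩
      obtain ⟨a, rfl⟩ := Submodule.mkQ_surjective _ a'
      rw [← ha]
      exact (Submodule.Quotient.mk_eq_zero _).mpr ⟨a, trivial, rfl⟩

theorem isWeaklyRegular_pow_succ_cons {x : R} {rs : List R} (hx : IsWeaklyRegular M (x :: rs))
    (n : ℕ) : IsWeaklyRegular M (x ^ (n + 1) :: rs) := by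
  induction n with
  | zero => rwa [zero_add, pow_one]
  | succ n ih =>
    rw [pow_succ]
    exact isWeaklyRegular_mul_cons ih hx

theorem isWeaklyRegular_cons_of_ker_eq_span {S : Type*} [CommRing S] {φ : R →+* S}
    (hφ : Surjective φ) {p : R} (hker : RingHom.ker φ = Ideal.span {p}) (hp : IsSMulRegular R p)
    {rs : List R} (h : IsWeaklyRegular S (rs.map φ)) : IsWeaklyRegular R (p :: rs) := by
  algebraize [φ]
  have hspan : p • ⊤ = LinearMap.ker (Algebra.linearMap R S) := by
    rw [← Submodule.ideal_span_singleton_smul, smul_eq_mul, Ideal.mul_top, ← hker]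
    rfl
  let e : QuotSMulTop p R ≃ₗ[R] S := Submodule.quotEquivOfEq _ _ hspan ≪≫ₗ
    (Algebra.linearMap R S).quotKerEquivOfSurjective hφ
  exact .cons hp ((e.isWeaklyRegular_congr rs).mpr <|
    (isWeaklyRegular_map_algebraMap_iff S S rs).mp h)

theorem isWeaklyRegular_pair_of_isRelPrime [NoZeroDivisors R] [DecompositionMonoid R] {v w : R}
    (hv : v ≠ 0) (h : IsRelPrime v w) : IsWeaklyRegular R [v, w] := by
  rw [isWeaklyRegular_cons_iff, isWeaklyRegular_singleton_iff,
    isSMulRegular_quotient_iff_mem_of_smul_mem]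
  refine ⟨IsSMulRegular.of_ne_zero hv, fun x hx => ?_⟩
  rw [← Submodule.ideal_span_singleton_smul, smul_eq_mul, Ideal.mul_top,
    Ideal.mem_span_singleton] at hx ⊢
  exact h.dvd_of_dvd_mul_left hx

theorem isRegular_of_isWeaklyRegular_of_map_eq_zero {S : Type*} [CommRing S] [Nontrivial S]
    {rs : List R} (h : IsWeaklyRegular R rs) (φ : R →+* S) (hφ : ∀ r ∈ rs, φ r = 0) :
    IsRegular R rs := by
  refine ⟨h, fun htop => RingHom.ker_ne_top φ (top_le_iff.mp ?_)⟩
  rw [htop, smul_eq_mul, Ideal.mul_top, Ideal.ofList, Ideal.span_le]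
  exact hφ

end WeaklyRegular

theorem finite_quotient_of_X_mem_radical {σ K : Type*} [Finite σ] [CommRing K]
    {I : Ideal (MvPolynomial σ K)} (h : ∀ i, X i ∈ I.radical) :
    Module.Finite K (MvPolynomial σ K ⧸ I) := by
  have hX (i : σ) : IsIntegral K (Ideal.Quotient.mkₐ K I (X i)) := by
    obtain ⟨m, hm⟩ := h i
    refine ⟨.X ^ m, Polynomial.monic_X_pow m, ?_⟩
    simpa [← map_pow] using Ideal.Quotient.eq_zero_iff_mem.mpr hm
  have hle : Algebra.adjoin K (Set.range X) ≤
      (integralClosure K (MvPolynomial σ K ⧸ I)).comap (Ideal.Quotient.mkₐ K I) :=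
    Algebra.adjoin_le (Set.range_subset_iff.mpr hX)
  have : Algebra.IsIntegral K (MvPolynomial σ K ⧸ I) :=
    ⟨(Ideal.Quotient.mkₐ_surjective K I).forall.mpr fun f => hle (by simp [adjoin_range_X])⟩
  exact Algebra.IsIntegral.finite

section Hyperplane

variable {K : Type*} [CommRing K] {n : ℕ} (i : Fin (n + 1)) (a : MvPolynomial (Fin n) K)

theorem aeval_insertNth_rename_succAbove (f : MvPolynomial (Fin n) K) :
    aeval (i.insertNth a X) (rename i.succAbove f) = f := by
  rw [aeval_rename]
  simp [Function.comp_def]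

theorem ker_aeval_insertNth :
    RingHom.ker (aeval (i.insertNth a X) : MvPolynomial (Fin (n + 1)) K →ₐ[K] _) =
      Ideal.span {X i - rename i.succAbove a} := by
  set I := Ideal.span {X i - rename i.succAbove a}
  have hmod : ((Ideal.Quotient.mkₐ K I).comp (rename i.succAbove)).comp
      (aeval (i.insertNth a X)) = Ideal.Quotient.mkₐ K I := by
    refine algHom_ext fun j => ?_
    induction j using i.succAboveCases with
    | x =>
      have hX := Ideal.Quotient.eq.mpr
        (Ideal.mem_span_singleton_self (X i - rename i.succAbove a))
      simpa using hX.symm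
    | p j => simp
  refine le_antisymm (fun f hf => ?_) ?_
  · rw [← Ideal.Quotient.eq_zero_iff_mem]
    refine (DFunLike.congr_fun hmod f).symm.trans ?_
    rw [AlgHom.comp_apply, (RingHom.mem_ker).mp hf, map_zero]
  · rw [Ideal.span_singleton_le_iff_mem, RingHom.mem_ker, map_sub, aeval_X,
      aeval_insertNth_rename_succAbove, Fin.insertNth_apply_same, sub_self]

theorem sub_rename_succAbove_ne_zero [Nontrivial K] :
    (X i - rename i.succAbove a : MvPolynomial (Fin (n + 1)) K) ≠ 0 := fun h => by
  have h' := congrArg (aeval (i.insertNth (a + 1) X)) h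
  rw [map_sub, aeval_X, aeval_insertNth_rename_succAbove, Fin.insertNth_apply_same] at h'
  simp at h'

end Hyperplane

section Recurrence

variable {R S : Type*} [CommRing R] [CommRing S]

/-- The matrix `A` at arbitrary elements of a commutative ring, so that the recurrence can be
transported along ring homomorphisms. -/
def transferMatrix (b t k : R) : Matrix (Fin 3) (Fin 3) R :=
  !![b, 0, 0;
     1, 0, k;
     0, 1, t]

/-- The vector `G₁` at arbitrary elements of a commutative ring. -/
def initialVector (b t : R) : Fin 3 → R := ![b * (2 * b - t), 2 * b - t, 2]

/-- The vector `G_{n+1} = Aⁿ·G₁` at arbitrary elements of a commutative ring; as for `G`, the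
index `n` is one less than in the paper. -/
def iterateVector (b t k : R) (n : ℕ) : Fin 3 → R :=
  (transferMatrix b t k ^ n).mulVec (initialVector b t)

theorem map_iterateVector (φ : R →+* S) (b t k : R) (n : ℕ) (i : Fin 3) :
    φ (iterateVector b t k n i) = iterateVector (φ b) (φ t) (φ k) n i := by
  have hM : φ.mapMatrix (transferMatrix b t k) = transferMatrix (φ b) (φ t) (φ k) := by
    ext i j; fin_cases i <;> fin_cases j <;> simp [transferMatrix]
  have hv : φ ∘ initialVector b t = initialVector (φ b) (φ t) := by
    ext i; fin_cases i <;> simp [initialVector, map_ofNat φ 2]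
  rw [iterateVector, RingHom.map_mulVec, ← RingHom.mapMatrix_apply, map_pow, hM, hv, iterateVector]

variable (b t k : R)

theorem iterateVector_zero : iterateVector b t k 0 = initialVector b t := by
  simp [iterateVector]

theorem iterateVector_succ (n : ℕ) :
    iterateVector b t k (n + 1) = (transferMatrix b t k).mulVec (iterateVector b t k n) := by
  rw [iterateVector, iterateVector, pow_succ', Matrix.mulVec_mulVec]

theorem iterateVector_succ_zero (n : ℕ) :
    iterateVector b t k (n + 1) 0 = b * iterateVector b t k n 0 := by
  simp [iterateVector_succ, transferMatrix, Matrix.mulVec, dotProduct, Fin.sum_univ_three]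

theorem iterateVector_succ_one (n : ℕ) :
    iterateVector b t k (n + 1) 1 = iterateVector b t k n 0 + k * iterateVector b t k n 2 := by
  simp [iterateVector_succ, transferMatrix, Matrix.mulVec, dotProduct, Fin.sum_univ_three]

theorem iterateVector_succ_two (n : ℕ) :
    iterateVector b t k (n + 1) 2 = iterateVector b t k n 1 + t * iterateVector b t k n 2 := by
  simp [iterateVector_succ, transferMatrix, Matrix.mulVec, dotProduct, Fin.sum_univ_three]

theorem iterateVector_apply_zero (n : ℕ) :
    iterateVector b t k n 0 = b ^ (n + 1) * (2 * b - t) := by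
  induction n with
  | zero => simp [iterateVector_zero, initialVector]
  | succ n ih => rw [iterateVector_succ_zero, ih]; ring

variable {b t} in
theorem iterateVector_apply_zero_eq_zero (hbt : b * (2 * b - t) = 0) (n : ℕ) :
    iterateVector b t k n 0 = 0 := by
  rw [iterateVector_apply_zero, pow_succ, mul_assoc, hbt, mul_zero]

variable {b t} in
theorem dvd_iterateVector_succ_two_sub (hbt : b * (2 * b - t) = 0) (n : ℕ) :
    k ∣ iterateVector b t k (n + 1) 2 - t ^ n * (2 * b + t) := by
  induction n with
  | zero =>
    have h : iterateVector b t k 1 2 = 2 * b + t := by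
      rw [iterateVector_succ_two, iterateVector_zero]
      simp only [initialVector, Matrix.cons_val]
      ring
    simp [h]
  | succ n ih =>
    obtain ⟨c, hc⟩ := ih
    rw [iterateVector_succ_two, iterateVector_succ_one, iterateVector_apply_zero_eq_zero k hbt]
    exact ⟨iterateVector b t k n 2 + t * c, by linear_combination t * hc⟩

theorem iterateVector_zero_zero_zero_succ (n : ℕ) : iterateVector (0 : R) 0 0 (n + 1) = 0 := by
  have hw := dvd_iterateVector_succ_two_sub (b := (0 : R)) (t := 0) 0 (by simp) n
  funext i
  fin_cases i
  · simp [iterateVector_apply_zero]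
  · simp [iterateVector_succ_one, iterateVector_apply_zero]
  · simpa using hw

variable {b t k}

theorem not_dvd_iterateVector_two (hbt : b * (2 * b - t) = 0) (h2 : IsUnit (2 : R))
    (hk : Prime k) (hkt : ¬k ∣ t) (hkw : ¬k ∣ 2 * b + t) (n : ℕ) :
    ¬k ∣ iterateVector b t k n 2 := by
  cases n with
  | zero =>
    simpa [iterateVector_zero, initialVector] using fun h => hk.not_isUnit (isUnit_of_dvd_unit h h2)
  | succ n =>
    rw [dvd_iff_dvd_of_dvd_sub (dvd_iterateVector_succ_two_sub k hbt n)]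
    exact fun h => (hk.dvd_or_dvd h).elim (hkt ∘ hk.dvd_of_dvd_pow) hkw

theorem isRelPrime_iterateVector [IsDomain R] [DecompositionMonoid R]
    (hbt : b * (2 * b - t) = 0) (h2 : IsUnit (2 : R))
    (hk : Prime k) (hkt : ¬k ∣ t) (hkw : ¬k ∣ 2 * b + t) (n : ℕ) :
    IsRelPrime (iterateVector b t k n 1) (iterateVector b t k n 2) := by
  induction n with
  | zero => simpa [iterateVector_zero, initialVector] using h2.isRelPrime_right
  | succ n ih =>
    rw [iterateVector_succ_one, iterateVector_apply_zero_eq_zero k hbt, zero_add]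
    refine .mul_left ?_ ?_
    · exact hk.irreducible.isRelPrime_iff_not_dvd.mpr
        (not_dvd_iterateVector_two hbt h2 hk hkt hkw (n + 1))
    · rw [iterateVector_succ_two]
      exact ih.symm.add_mul_right_right t

theorem isWeaklyRegular_iterateVector [IsDomain R] [DecompositionMonoid R]
    (hbt : b * (2 * b - t) = 0) (h2 : IsUnit (2 : R))
    (hk : Prime k) (hkt : ¬k ∣ t) (hkw : ¬k ∣ 2 * b + t) (n : ℕ) :
    IsWeaklyRegular R [iterateVector b t k (n + 1) 1, iterateVector b t k (n + 1) 2] := by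
  refine isWeaklyRegular_pair_of_isRelPrime ?_ (isRelPrime_iterateVector hbt h2 hk hkt hkw _)
  rw [iterateVector_succ_one, iterateVector_apply_zero_eq_zero k hbt, zero_add]
  refine mul_ne_zero hk.ne_zero fun hw => ?_
  exact not_dvd_iterateVector_two hbt h2 hk hkt hkw n (hw ▸ dvd_zero k)

theorem iterateVector_ne_zero [NoZeroDivisors R] (hbt : b * (2 * b - t) = 0) (h2 : (2 : R) ≠ 0)
    (hk : k ≠ 0) (n : ℕ) : iterateVector b t k n ≠ 0 := by
  induction n with
  | zero => exact fun h => h2 (by simpa [iterateVector_zero, initialVector] using congrFun h 2)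
  | succ n ih =>
    refine fun h => ih ?_
    have hu := iterateVector_apply_zero_eq_zero k hbt n
    have hw : iterateVector b t k n 2 = 0 := by
      simpa [iterateVector_succ_one, hu, hk] using congrFun h 1
    have hv : iterateVector b t k n 1 = 0 := by
      simpa [iterateVector_succ_two, hw] using congrFun h 2
    funext i
    fin_cases i
    exacts [hu, hv, hw]

theorem eq_zero_of_iterateVector_succ_eq_zero [NoZeroDivisors R] (h2 : (2 : R) ≠ 0) {n : ℕ}
    (h : iterateVector b t k (n + 1) = 0) : b = 0 ∧ t = 0 ∧ k = 0 := by
  have hline : b = 0 ∨ t = 2 * b := by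
    simpa [iterateVector_apply_zero, sub_eq_zero, @eq_comm _ t] using congrFun h 0
  have hbt : b * (2 * b - t) = 0 := by
    rcases hline with rfl | rfl <;> ring
  obtain rfl : k = 0 := by
    by_contra hk
    exact iterateVector_ne_zero hbt h2 hk (n + 1) h
  have ht : t = 0 ∨ 2 * b + t = 0 := by
    have hw := dvd_iterateVector_succ_two_sub 0 hbt n
    rw [h, Pi.zero_apply, zero_sub, zero_dvd_iff, neg_eq_zero, mul_eq_zero] at hw
    exact hw.imp_left eq_zero_of_pow_eq_zero
  rcases hline with rfl | rfl
  · simpa using ht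
  · have hb : b = 0 := by
      rcases ht with ht | ht
      · exact (mul_eq_zero.mp ht).resolve_left h2
      · refine (mul_eq_zero.mp ?_).resolve_left (mul_ne_zero h2 h2)
        linear_combination ht
    simp [hb]

theorem isWeaklyRegular_cons_iterateVector [NoZeroDivisors R] [IsDomain S] [DecompositionMonoid S]
    {φ : R →+* S} (hφ : Surjective φ) {p : R} (hker : RingHom.ker φ = Ideal.span {p}) (hp : p ≠ 0)
    (hbt : φ b * (2 * φ b - φ t) = 0) (h2 : IsUnit (2 : S))
    (hk : Prime (φ k)) (hkt : ¬φ k ∣ φ t) (hkw : ¬φ k ∣ 2 * φ b + φ t) (n : ℕ) :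
    IsWeaklyRegular R [p, iterateVector b t k (n + 1) 1, iterateVector b t k (n + 1) 2] := by
  refine isWeaklyRegular_cons_of_ker_eq_span hφ hker (.of_ne_zero hp) ?_
  simpa only [List.map_cons, List.map_nil, map_iterateVector] using
    isWeaklyRegular_iterateVector hbt h2 hk hkt hkw n

end Recurrence

section Polynomial

variable {K : Type*} [CommRing K]

theorem finite_quotient_span_iterateVector (h2 : IsUnit (2 : K)) (n : ℕ) :
    let g : Fin 3 → MvPolynomial (Fin 3) K := iterateVector (X 0) (X 1) (X 2) (n + 1)
    Module.Finite K (MvPolynomial (Fin 3) K ⧸ Ideal.span {g 0, g 1, g 2}) := by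
  intro g
  refine finite_quotient_of_X_mem_radical fun i => ?_
  rw [Ideal.radical_eq_sInf, Submodule.mem_sInf]
  rintro P ⟨hle, hP⟩
  have h2P : (2 : MvPolynomial (Fin 3) K ⧸ P) ≠ 0 := by
    rw [← map_ofNat (algebraMap K (MvPolynomial (Fin 3) K ⧸ P)) 2]
    exact (h2.map _).ne_zero
  have hg : iterateVector (Ideal.Quotient.mk P (X 0)) (Ideal.Quotient.mk P (X 1))
      (Ideal.Quotient.mk P (X 2)) (n + 1) = 0 := by
    funext j
    rw [← map_iterateVector]
    refine Ideal.Quotient.eq_zero_iff_mem.mpr (hle (Ideal.subset_span ?_))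
    fin_cases j <;> simp [g]
  obtain ⟨hb, ht, hk⟩ := eq_zero_of_iterateVector_succ_eq_zero h2P hg
  rw [← Ideal.Quotient.eq_zero_iff_mem]
  fin_cases i
  exacts [hb, ht, hk]

theorem not_X_dvd_C_mul_X {σ : Type*} [Nontrivial K] {i j : σ} (hij : i ≠ j)
    {c : K} (hc : IsUnit c) :
    ¬(X i : MvPolynomial σ K) ∣ C c * X j := by
  rwa [(hc.map C).dvd_mul_left, X_dvd_X]

variable [IsDomain K] [UniqueFactorizationMonoid K]

theorem isWeaklyRegular_cons_iterateVector_X (h2 : IsUnit (2 : K)) {i : Fin 3}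
    {a : MvPolynomial (Fin 2) K} {b t : MvPolynomial (Fin 2) K}
    (hsubst : i.insertNth a X = ![b, t, X 1]) (hbt : b * (2 * b - t) = 0)
    (hkt : ¬X 1 ∣ t) (hkw : ¬X 1 ∣ 2 * b + t)
    {p : MvPolynomial (Fin 3) K} (hp : Associated p (X i - rename i.succAbove a)) (n : ℕ) :
    let g : Fin 3 → MvPolynomial (Fin 3) K := iterateVector (X 0) (X 1) (X 2) (n + 1)
    IsWeaklyRegular (MvPolynomial (Fin 3) K) [p, g 1, g 2] := by
  let φ : MvPolynomial (Fin 3) K →ₐ[K] MvPolynomial (Fin 2) K := aeval (i.insertNth a X)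
  have hφ (j : Fin 3) : φ.toRingHom (X j) = ![b, t, X 1] j := hsubst ▸ aeval_X _ j
  have hsurj : Surjective φ := fun f => ⟨_, aeval_insertNth_rename_succAbove i a f⟩
  have hker : RingHom.ker φ = Ideal.span {p} :=
    (ker_aeval_insertNth i a).trans (Ideal.span_singleton_eq_span_singleton.mpr hp.symm)
  have hp0 : p ≠ 0 := hp.ne_zero_iff.mpr (sub_rename_succAbove_ne_zero i a)
  have h2' : IsUnit (2 : MvPolynomial (Fin 2) K) := by
    simpa only [map_ofNat] using h2.map (C (σ := Fin 2))
  refine isWeaklyRegular_cons_iterateVector (φ := φ.toRingHom) hsurj hker hp0 ?_ h2' ?_ ?_ ?_ n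
  all_goals simp only [hφ]
  exacts [hbt, X_prime, hkt, hkw]

theorem isWeaklyRegular_X_zero_cons (h2 : IsUnit (2 : K)) (n : ℕ) :
    let g : Fin 3 → MvPolynomial (Fin 3) K := iterateVector (X 0) (X 1) (X 2) (n + 1)
    IsWeaklyRegular (MvPolynomial (Fin 3) K) [X 0, g 1, g 2] := by
  have h : ¬(X 1 : MvPolynomial (Fin 2) K) ∣ X 0 := by simp [X_dvd_X]
  refine isWeaklyRegular_cons_iterateVector_X h2 (i := 0) (a := 0) (b := 0) (t := X 0)
    ?_ (by simp) h (by simp) (by simp) n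
  ext1 j
  fin_cases j <;> rfl

theorem isWeaklyRegular_two_mul_X_zero_sub_X_one_cons (h2 : IsUnit (2 : K)) (n : ℕ) :
    let g : Fin 3 → MvPolynomial (Fin 3) K := iterateVector (X 0) (X 1) (X 2) (n + 1)
    IsWeaklyRegular (MvPolynomial (Fin 3) K) [2 * X 0 - X 1, g 1, g 2] := by
  have hC : (C 2 : MvPolynomial (Fin 2) K) = 2 := map_ofNat C 2
  refine isWeaklyRegular_cons_iterateVector_X h2 (i := 1) (a := C 2 * X 0) (b := X 0)
    (t := C 2 * X 0) ?_ (by simp [hC]) (not_X_dvd_C_mul_X (by decide) h2) ?_ ?_ n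
  · ext1 j
    fin_cases j <;> rfl
  · have h4 := not_X_dvd_C_mul_X (σ := Fin 2) (i := 1) (j := 0) (by decide) (h2.mul h2)
    rwa [← hC, ← two_mul, ← mul_assoc, ← hC, ← C_mul]
  · have hneg : (X 1 - rename (Fin.succAbove 1) (C 2 * X 0) : MvPolynomial (Fin 3) K) =
        -(2 * X 0 - X 1) := by
      rw [map_mul, rename_C, rename_X, map_ofNat C 2, neg_sub]
      rfl
    rw [hneg]
    exact (Associated.refl _).neg_right

theorem isRegular_iterateVector (h2 : IsUnit (2 : K)) (n : ℕ) :
    let g : Fin 3 → MvPolynomial (Fin 3) K := iterateVector (X 0) (X 1) (X 2) (n + 1)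
    IsRegular (MvPolynomial (Fin 3) K) [g 0, g 1, g 2] := by
  intro g
  have hg (i : Fin 3) : constantCoeff (g i) = 0 := by
    simp [g, map_iterateVector, iterateVector_zero_zero_zero_succ]
  refine isRegular_of_isWeaklyRegular_of_map_eq_zero ?_ constantCoeff (by simp [hg])
  rw [show g 0 = _ from iterateVector_apply_zero _ _ _ _]
  exact isWeaklyRegular_mul_cons
    (isWeaklyRegular_pow_succ_cons (isWeaklyRegular_X_zero_cons h2 n) (n + 1))
    (isWeaklyRegular_two_mul_X_zero_sub_X_one_cons h2 n)

theorem stmt12_general (h2 : IsUnit (2 : K)) (n : ℕ) (hn : 1 ≤ n) :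
    let g : Fin 3 → MvPolynomial (Fin 3) K := iterateVector (X 0) (X 1) (X 2) n
    IsRegular (MvPolynomial (Fin 3) K) [g 0, g 1, g 2] ∧
      Module.Finite K (MvPolynomial (Fin 3) K ⧸ Ideal.span {g 0, g 1, g 2}) := by
  obtain ⟨m, rfl⟩ := Nat.exists_eq_add_of_le' hn
  exact ⟨isRegular_iterateVector h2 m, finite_quotient_span_iterateVector h2 m⟩

end Polynomial

/-- For every `n ≥ 1`, the three polynomials
`u_{n+1}, v_{n+1}, w_{n+1}` form a regular sequence in `ℂ[b,t,k]`, and the quotient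
`ℂ[b,t,k]/(u_{n+1}, v_{n+1}, w_{n+1})` is a finite-dimensional `ℂ`-vector space. -/
theorem stmt12 (n : ℕ) (hn : 1 ≤ n) :
    RingTheory.Sequence.IsRegular R3 [G n 0, G n 1, G n 2] ∧
    FiniteDimensional ℂ (R3 ⧸ Ideal.span {G n 0, G n 1, G n 2}) :=
  stmt12_general two_ne_zero.isUnit n hn

end
end

section
/- Let H be the 3×3 matrix over ℂ[b,q,r₁,r₂] with rows (4b−r₁−r₂, 0, 0), (2, b−r₂, b−r₁), (0, 1, 1). Then: (i) every entry of H·E − φ(A)·H lies in the principal ideal (q(r₁+r₂−4b)), where φ(A) denotes A with its entries transported by φ; (ii) H·R₁ = φ(G₁) exactly; (iii) consequently, for every n ≥ 0, every component of H·R_{n+1} − φ(G_{n+1}) lies in the ideal (q(r₁+r₂−4b)). -/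
open MvPolynomial

noncomputable section

/-- `R₁ = (b,1,1)ᵀ`. -/
def R1 : Fin 3 → P4 := ![X 0, 1, 1]

/-- The `ℂ`-algebra homomorphism `φ : ℂ[b,t,k] → ℂ[b,q,r₁,r₂]` with `φ(b)=b`,
`φ(t)=r₁+r₂−2b`, `φ(k)=4q−(b−r₁)(b−r₂)`. -/
def φ : R3 →ₐ[ℂ] P4 :=
  aeval ![X 0, X 2 + X 3 - 2 * X 0, 4 * X 1 - (X 0 - X 2) * (X 0 - X 3)]

/-- The 3×3 matrix `H` over `ℂ[b,q,r₁,r₂]` with rows `(4b−r₁−r₂, 0, 0)`,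
`(2, b−r₂, b−r₁)`, `(0, 1, 1)`. -/
def H3 : Matrix (Fin 3) (Fin 3) P4 :=
  !![4 * X 0 - X 2 - X 3, 0, 0;
     2, X 0 - X 3, X 0 - X 2;
     0, 1, 1]

/-! The defect `H * E - φ(A) * H` is `q (r₁ + r₂ - 4b)` times a constant matrix. Some defect is
unavoidable: the characteristic polynomial of `E` exceeds that of `φ(A)` by `2q (r₁ + r₂ - 4b)`,
while `H` is generically invertible. Modulo the ideal generated by `q (r₁ + r₂ - 4b)`, `H`
intertwines `E` with `φ(A)`, so it carries the orbit of `R₁` to the orbit of `H R₁ = φ(G₁)`. -/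

section Intertwining

variable {m n R : Type*} [Fintype m] [DecidableEq m] [Fintype n] [DecidableEq n] [Ring R]

theorem mulVec_pow_sub_pow_mulVec_mem {I : Ideal R} [I.IsTwoSided] {H : Matrix m n R}
    {E : Matrix n n R} {A : Matrix m m R} (hHE : ∀ i j, (H * E - A * H) i j ∈ I) (v : n → R)
    (k : ℕ) (i : m) :
    (H.mulVec ((E ^ k).mulVec v) - (A ^ k).mulVec (H.mulVec v)) i ∈ I := by
  induction k generalizing i with
  | zero => simp
  | succ k ih =>
    have error_succ : H.mulVec ((E ^ (k + 1)).mulVec v) - (A ^ (k + 1)).mulVec (H.mulVec v) =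
        (H * E - A * H).mulVec ((E ^ k).mulVec v) +
          A.mulVec (H.mulVec ((E ^ k).mulVec v) - (A ^ k).mulVec (H.mulVec v)) := by
      simp only [pow_succ', Matrix.sub_mulVec, Matrix.mulVec_sub, ← Matrix.mulVec_mulVec]
      abel
    rw [error_succ]
    exact I.add_mem (I.sum_mem fun j _ => I.mul_mem_right _ (hHE i j))
      (I.sum_mem fun j _ => I.mul_mem_left _ (ih j))

end Intertwining

section CommRing

variable {K S : Type*} [CommRing K] [CommRing S]

/-- The matrix `A` with entries in any commutative ring: multiplication by `x` on
`S[x] / ((x - b) (x² - t x - k))` in the basis `1, x - b, x (x - b)`. -/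
def newtonCompanion (b t k : S) : Matrix (Fin 3) (Fin 3) S :=
  !![b, 0, 0;
     1, 0, k;
     0, 1, t]

/-- The initial vector `G₁` with entries in any commutative ring, for the orbit under
`newtonCompanion b t k`. -/
def newtonCompanionSeed (b t : S) : Fin 3 → S := ![b * (2 * b - t), 2 * b - t, 2]

/-- The matrix `E` with entries in any commutative ring; it is an arrowhead matrix, being zero
outside its first row, first column and diagonal. -/
def arrowhead (b q r₁ r₂ : S) : Matrix (Fin 3) (Fin 3) S :=
  !![b, 2 * q, 2 * q;
     1, r₁ - b, 0;
     1, 0, r₂ - b]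

/-- The initial vector `R₁` with entries in any commutative ring, for the orbit under
`arrowhead b q r₁ r₂`. -/
def arrowheadSeed (b : S) : Fin 3 → S := ![b, 1, 1]

/-- The matrix `H` with entries in any commutative ring, which intertwines `arrowhead` with
`newtonCompanion` up to a multiple of `q (r₁ + r₂ - 4b)`. -/
def arrowheadIntertwiner (b r₁ r₂ : S) : Matrix (Fin 3) (Fin 3) S :=
  !![4 * b - r₁ - r₂, 0, 0;
     2, b - r₂, b - r₁;
     0, 1, 1]

theorem map_newtonCompanion (f : K →+* S) (b t k : K) :
    (newtonCompanion b t k).map f = newtonCompanion (f b) (f t) (f k) := by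
  ext i j
  fin_cases i <;> fin_cases j <;> simp [newtonCompanion]

theorem comp_newtonCompanionSeed (f : K →+* S) (b t : K) :
    f ∘ newtonCompanionSeed b t = newtonCompanionSeed (f b) (f t) := by
  ext i
  fin_cases i <;> simp [newtonCompanionSeed, map_ofNat f 2]

theorem arrowheadIntertwiner_mul_arrowhead_sub (b q r₁ r₂ : S) :
    arrowheadIntertwiner b r₁ r₂ * arrowhead b q r₁ r₂ -
        newtonCompanion b (r₁ + r₂ - 2 * b) (4 * q - (b - r₁) * (b - r₂)) *
          arrowheadIntertwiner b r₁ r₂ =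
      (q * (r₁ + r₂ - 4 * b)) • !![0, -2, -2; 0, 0, 0; 0, 0, 0] := by
  ext i j
  fin_cases i <;> fin_cases j <;>
    simp [arrowheadIntertwiner, arrowhead, newtonCompanion] <;> ring

theorem arrowheadIntertwiner_mulVec_arrowheadSeed (b r₁ r₂ : S) :
    (arrowheadIntertwiner b r₁ r₂).mulVec (arrowheadSeed b) =
      newtonCompanionSeed b (r₁ + r₂ - 2 * b) := by
  ext i
  fin_cases i <;>
    simp [arrowheadIntertwiner, arrowheadSeed, newtonCompanionSeed] <;> ring

theorem stmt14_general (f : K →+* S) {b t k : K} {b' q r₁ r₂ : S} (hb : f b = b')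
    (ht : f t = r₁ + r₂ - 2 * b') (hk : f k = 4 * q - (b' - r₁) * (b' - r₂)) :
    (∀ i j : Fin 3,
      (arrowheadIntertwiner b' r₁ r₂ * arrowhead b' q r₁ r₂ -
        (newtonCompanion b t k).map f * arrowheadIntertwiner b' r₁ r₂) i j ∈
          Ideal.span {q * (r₁ + r₂ - 4 * b')}) ∧
    ((arrowheadIntertwiner b' r₁ r₂).mulVec (arrowheadSeed b') =
      fun j => f (newtonCompanionSeed b t j)) ∧
    (∀ n : ℕ, ∀ j : Fin 3,
      (arrowheadIntertwiner b' r₁ r₂).mulVec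
          ((arrowhead b' q r₁ r₂ ^ n).mulVec (arrowheadSeed b')) j -
        f ((newtonCompanion b t k ^ n).mulVec (newtonCompanionSeed b t) j) ∈
          Ideal.span {q * (r₁ + r₂ - 4 * b')}) := by
  have intertwines : ∀ i j : Fin 3,
      (arrowheadIntertwiner b' r₁ r₂ * arrowhead b' q r₁ r₂ -
        (newtonCompanion b t k).map f * arrowheadIntertwiner b' r₁ r₂) i j ∈
          Ideal.span {q * (r₁ + r₂ - 4 * b')} := fun i j => by
    rw [map_newtonCompanion, hb, ht, hk, arrowheadIntertwiner_mul_arrowhead_sub]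
    exact Ideal.mul_mem_right _ _ (Ideal.mem_span_singleton_self _)
  have seed : (arrowheadIntertwiner b' r₁ r₂).mulVec (arrowheadSeed b') =
      f ∘ newtonCompanionSeed b t := by
    rw [comp_newtonCompanionSeed, hb, ht, arrowheadIntertwiner_mulVec_arrowheadSeed]
  refine ⟨intertwines, seed, fun n j => ?_⟩
  rw [RingHom.map_mulVec, Matrix.map_pow, ← seed]
  exact mulVec_pow_sub_pow_mulVec_mem intertwines (arrowheadSeed b') n j

end CommRing

/-- (i) Every entry of `H·E − φ(A)·H` lies in the principal ideal
`(q(r₁+r₂−4b))`; (ii) `H·R₁ = φ(G₁)` exactly; (iii) consequently, for every `n ≥ 0`,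
every component of `H·R_{n+1} − φ(G_{n+1})` lies in the ideal `(q(r₁+r₂−4b))`. -/
theorem stmt14 :
    (∀ i j : Fin 3,
      (H3 * E3 - (A3.map φ) * H3) i j ∈
        Ideal.span {(X 1 * (X 2 + X 3 - 4 * X 0) : P4)}) ∧
    (H3.mulVec R1 = fun j => φ (G1 j)) ∧
    (∀ n : ℕ, ∀ j : Fin 3,
      H3.mulVec ((E3 ^ n).mulVec R1) j - φ (((A3 ^ n).mulVec G1) j) ∈
        Ideal.span {(X 1 * (X 2 + X 3 - 4 * X 0) : P4)}) :=
  stmt14_general (φ : R3 →+* P4) (aeval_X _ 0) (aeval_X _ 1) (aeval_X _ 2)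

end
end

section
/- Fix n ≥ 1 and grade ℂ[b,t,k] by deg b = deg t = 1, deg k = 2, and ℂ[b,q,r₁,r₂] by deg b = deg r₁ = deg r₂ = 1, deg q = 2. For every homogeneous polynomial a ∈ ℂ[b,t,k] of degree at most n+2: if φ(a) lies in the ideal (q(r₁+r₂−4b), x_{n+1}, y_{n+1}, z_{n+1}) of ℂ[b,q,r₁,r₂], then a lies in the ideal (u_{n+1}, v_{n+1}, w_{n+1}) of ℂ[b,t,k]. In other words, the induced map ℂ[b,t,k]/(u_{n+1},v_{n+1},w_{n+1}) → ℂ[b,q,r₁,r₂]/(q(r₁+r₂−4b), x_{n+1}, y_{n+1}, z_{n+1}) is injective in degrees ≤ n+2. -/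
open MvPolynomial

noncomputable section

/-!
Over `S = ℂ[b,t,k][q]/(q², q(t - 2b))` the ring `ℂ[b,q,r₁,r₂]` becomes a quadratic extension in
which `r₁ - b` and `r₂ - b` are conjugate. There `x_{n+1} = b^{n+1} + qℓ_n` lies in `S`, while
`y_{n+1}` and `z_{n+1}` are conjugate with traces expressed through `v_{n+1}` and `w_{n+1}`, so that
taking traces of a membership of `φ(a)` gives `a ∈ (b^{n+1} + qℓ_n, v_{n+1}, w_{n+1})` over `S`.
Comparing coefficients of `1` and `q` yields `α` with `a ≡ αb^{n+1}` modulo `(v_{n+1}, w_{n+1})` and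
`αℓ_n ∈ (t - 2b, w_{n+1}, v_{n+1}, b^{n+1})`.

In degrees `≤ n + 2` only the components of `α` of degrees `0` and `1` matter. Evaluating the second
membership at `(b,t,k) = (1,2,0)` and `(1,2,-1)` shows that the constant component vanishes and, for
`n ≥ 2`, that the linear one is a multiple of `2b - t`; since `u_{n+1} = b^{n+1}(2b - t)`, this
suffices. For `n = 1`, every multiple of `b²` of degree `3` in `b` and `t` lies in the target ideal.
-/

open QuadraticAlgebra (omega trace)

lemma G_zero : G 0 = G1 := by simp [G]

lemma G_succ (n : ℕ) :
    G (n + 1) = ![X 0 * G n 0, G n 0 + X 2 * G n 2, G n 1 + X 1 * G n 2] := by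
  rw [G, pow_succ', ← Matrix.mulVec_mulVec, ← G]
  ext1 i
  fin_cases i <;> simp [A3, Matrix.mulVec, dotProduct, Fin.sum_univ_three]

lemma G_apply_zero (n : ℕ) : G n 0 = X 0 ^ (n + 1) * (2 * X 0 - X 1) := by
  induction n with
  | zero => simp [G_zero, G1]
  | succ n ih =>
    simp only [G_succ, ih, Matrix.cons_val_zero]
    ring

lemma Rv_zero : Rv 0 = ![X 0, 1, 1] := by simp [Rv]

lemma Rv_succ_s15 (n : ℕ) :
    Rv (n + 1) = ![X 0 * Rv n 0 + 2 * X 1 * Rv n 1 + 2 * X 1 * Rv n 2,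
      Rv n 0 + (X 2 - X 0) * Rv n 1, Rv n 0 + (X 3 - X 0) * Rv n 2] := by
  rw [Rv, pow_succ', ← Matrix.mulVec_mulVec, ← Rv]
  ext1 i
  fin_cases i <;> simp [E3, Matrix.mulVec, dotProduct, Fin.sum_univ_three]

/-- The coefficient `ℓ_n` of `q` in `x_{n+1} ≡ b^{n+1} + q ℓ_n` modulo `q(r₁+r₂−4b)`. -/
def qCoeff : ℕ → R3
  | 0 => 0
  | n + 1 => X 0 * qCoeff n + 2 * G n 2

section Trace

variable {S : Type*} [CommRing S] {c d : S}

lemma star_algebraMap_quadraticAlgebra (x : S) :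
    star (algebraMap S (QuadraticAlgebra S c d) x) = algebraMap S _ x := by
  ext <;> simp

lemma omega_add_star_omega :
    (omega + star omega : QuadraticAlgebra S c d) = algebraMap S _ d := by
  rw [← QuadraticAlgebra.algebraMap_trace_eq_add_star, QuadraticAlgebra.trace_omega]

lemma omega_mul_star_omega :
    (omega * star omega : QuadraticAlgebra S c d) = algebraMap S _ (-c) := by
  ext <;> simp

lemma trace_omega_mul_star (y : QuadraticAlgebra S c d) :
    trace (omega * star y) = d * trace y - trace (omega * y) := by
  simp only [QuadraticAlgebra.trace_def, QuadraticAlgebra.re_mul, QuadraticAlgebra.im_mul,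
    QuadraticAlgebra.re_star, QuadraticAlgebra.im_star, QuadraticAlgebra.omega_re,
    QuadraticAlgebra.omega_im]
  ring

lemma trace_omega_mul_algebraMap (x : S) :
    trace (omega * algebraMap S (QuadraticAlgebra S c d) x) = d * x := by
  simp [QuadraticAlgebra.trace_def]

lemma trace_algebraMap_add_omega_mul (x : S) (y : QuadraticAlgebra S c d) :
    trace (algebraMap S _ x + omega * y) = 2 * x + trace (omega * y) := by
  rw [map_add, QuadraticAlgebra.trace_algebraMap]

lemma trace_omega_mul_algebraMap_add_omega_mul (x : S) (y : QuadraticAlgebra S c d) :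
    trace (omega * (algebraMap S _ x + omega * y)) =
      d * x + c * trace y + d * trace (omega * y) := by
  simp only [QuadraticAlgebra.trace_def, QuadraticAlgebra.re_mul, QuadraticAlgebra.im_mul,
    QuadraticAlgebra.re_add, QuadraticAlgebra.im_add, QuadraticAlgebra.omega_re,
    QuadraticAlgebra.omega_im, QuadraticAlgebra.algebraMap_re, QuadraticAlgebra.algebraMap_im]
  ring

lemma trace_mem_of_mem_span {J : Ideal S}
    {s : Set (QuadraticAlgebra S c d)} (hs : ∀ z ∈ s, trace z ∈ J ∧ trace (omega * z) ∈ J)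
    {z : QuadraticAlgebra S c d} (hz : z ∈ Ideal.span s) : trace z ∈ J := by
  suffices h : trace z ∈ J ∧ trace (omega * z) ∈ J from h.1
  induction hz using Submodule.span_induction with
  | mem z hz => exact hs z hz
  | zero => simp
  | add y z _ _ hy hz =>
    simp only [mul_add, map_add]
    exact ⟨add_mem hy.1 hz.1, add_mem hy.2 hz.2⟩
  | smul r z _ hz =>
    have h₁ : trace (r • z) = r.re * trace z + r.im * trace (omega * z) := by
      simp only [smul_eq_mul, QuadraticAlgebra.trace_def, QuadraticAlgebra.re_mul,
        QuadraticAlgebra.im_mul, QuadraticAlgebra.omega_re, QuadraticAlgebra.omega_im]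
      ring
    have h₂ : trace (omega * r • z) =
        r.im * c * trace z + (r.re + d * r.im) * trace (omega * z) := by
      simp only [smul_eq_mul, QuadraticAlgebra.trace_def, QuadraticAlgebra.re_mul,
        QuadraticAlgebra.im_mul, QuadraticAlgebra.omega_re, QuadraticAlgebra.omega_im]
      ring
    rw [h₁, h₂]
    exact ⟨add_mem (J.mul_mem_left _ hz.1) (J.mul_mem_left _ hz.2),
      add_mem (J.mul_mem_left _ hz.1) (J.mul_mem_left _ hz.2)⟩

end Trace

section Approx

variable {S : Type*} [CommRing S] [Algebra R3 S] (q : S)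

/-- The approximation `b^{n+1} + q ℓ_n` of `x_{n+1}` in a `ℂ[b,t,k]`-algebra with an element `q`. -/
def xApprox (n : ℕ) : S := algebraMap R3 S (X 0) ^ (n + 1) + q * algebraMap R3 S (qCoeff n)

variable {q}

lemma xApprox_succ (n : ℕ) :
    xApprox q (n + 1) =
      algebraMap R3 S (X 0) * xApprox q n + 2 * q * algebraMap R3 S (G n 2) := by
  simp only [xApprox, qCoeff, map_add, map_mul, map_ofNat]
  ring

lemma algebraMap_G_zero (hq : q * algebraMap R3 S (2 * X 0 - X 1) = 0) (n : ℕ) :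
    algebraMap R3 S (G n 0) = algebraMap R3 S (2 * X 0 - X 1) * xApprox q n := by
  rw [G_apply_zero, xApprox, map_mul, map_pow]
  linear_combination (-algebraMap R3 S (qCoeff n)) * hq

end Approx

section Descent

variable {S : Type*} [CommRing S] [Algebra ℂ S] [Algebra R3 S] (q : S)

/-- The quadratic extension of an algebra `S` over `ℂ[b,t,k]` generated by `ω = r₁ - b`, where
`ω² = (k - 4q) + tω`. -/
abbrev RootExt : Type _ :=
  QuadraticAlgebra S (algebraMap R3 S (X 2) - 4 * q) (algebraMap R3 S (X 1))

/-- The map from `ℂ[b,q,r₁,r₂]` sending `r₁ - b` and `r₂ - b` to `ω` and its conjugate. -/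
def toRootExt : P4 →ₐ[ℂ] RootExt q :=
  aeval ![algebraMap S _ (algebraMap R3 S (X 0)), algebraMap S _ q,
    omega + algebraMap S _ (algebraMap R3 S (X 0)),
    star omega + algebraMap S _ (algebraMap R3 S (X 0))]

lemma toRootExt_Rv_succ (n : ℕ) :
    toRootExt q (Rv (n + 1) 0) =
        algebraMap S _ (algebraMap R3 S (X 0)) * toRootExt q (Rv n 0) +
          2 * algebraMap S _ q * (toRootExt q (Rv n 1) + toRootExt q (Rv n 2)) ∧
      toRootExt q (Rv (n + 1) 1) = toRootExt q (Rv n 0) + omega * toRootExt q (Rv n 1) ∧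
      toRootExt q (Rv (n + 1) 2) = toRootExt q (Rv n 0) + star omega * toRootExt q (Rv n 2) := by
  refine ⟨?_, ?_, ?_⟩
  · simp only [Rv_succ_s15, toRootExt, Matrix.cons_val_zero, map_add, map_mul, map_ofNat, aeval_X,
      Matrix.cons_val_one]
    ring
  · simp [Rv_succ_s15, toRootExt]
  · simp [Rv_succ_s15, toRootExt]

lemma toRootExt_φ [IsScalarTower ℂ R3 S] (a : R3) :
    toRootExt q (φ a) = algebraMap R3 (RootExt q) a := by
  suffices h : (toRootExt q).comp φ = IsScalarTower.toAlgHom ℂ R3 (RootExt q) from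
    DFunLike.congr_fun h a
  have hsum := omega_add_star_omega (c := algebraMap R3 S (X 2) - 4 * q)
    (d := algebraMap R3 S (X 1))
  have hprod := omega_mul_star_omega (c := algebraMap R3 S (X 2) - 4 * q)
    (d := algebraMap R3 S (X 1))
  simp only [map_neg, map_sub, map_mul, map_ofNat] at hprod
  ext1 i
  rw [AlgHom.comp_apply, φ, aeval_X, IsScalarTower.coe_toAlgHom',
    IsScalarTower.algebraMap_apply R3 S (RootExt q)]
  fin_cases i
  · simp [toRootExt]
  · simp only [toRootExt, map_sub, map_add, map_mul, map_ofNat, aeval_X, Fin.mk_one,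
      Matrix.cons_val]
    linear_combination hsum
  · simp only [toRootExt, map_sub, map_mul, map_ofNat, aeval_X, Fin.reduceFinMk, Matrix.cons_val]
    linear_combination -hprod

variable {q}

lemma toRootExt_Rv (hq : q * algebraMap R3 S (2 * X 0 - X 1) = 0) (n : ℕ) :
    toRootExt q (Rv n 0) = algebraMap S _ (xApprox q n) ∧
      toRootExt q (Rv n 2) = star (toRootExt q (Rv n 1)) ∧
      trace (toRootExt q (Rv n 1)) = algebraMap R3 S (G n 2) ∧
      trace (omega * toRootExt q (Rv n 1)) =
        algebraMap R3 S (G n 1 + X 1 * G n 2) - 2 * xApprox q n := by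
  induction n with
  | zero =>
    refine ⟨?_, ?_, ?_, ?_⟩
    · simp [Rv_zero, toRootExt, xApprox, qCoeff]
    · simp [Rv_zero]
    · simp [Rv_zero, G_zero, G1, map_ofNat]
    · simp only [Rv_zero, Matrix.cons_val, map_one, mul_one, QuadraticAlgebra.trace_omega, G_zero,
        G1, map_add, map_sub, map_mul, map_ofNat, xApprox, zero_add, pow_one, qCoeff, map_zero,
        mul_zero, add_zero]
      ring
  | succ n ih =>
    obtain ⟨hx, hz, hy, hωy⟩ := ih
    obtain ⟨hx', hy', hz'⟩ := toRootExt_Rv_succ q n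
    rw [hx] at hx' hy' hz'
    rw [hz] at hx' hz'
    refine ⟨?_, ?_, ?_, ?_⟩
    · rw [hx', ← QuadraticAlgebra.algebraMap_trace_eq_add_star, hy, xApprox_succ]
      simp only [map_add, map_mul, map_ofNat]
    · rw [hz', hy', star_add, star_mul', star_algebraMap_quadraticAlgebra]
    · rw [hy', trace_algebraMap_add_omega_mul, hωy, G_succ]
      simp
    · -- Here the trace recurrence has `(2b - t)x_{n+1}` where `v_{n+2} = u_{n+1} + k w_{n+1}` has
      -- `u_{n+1}`.
      have hu := algebraMap_G_zero hq n
      rw [hy', trace_omega_mul_algebraMap_add_omega_mul, hωy, hy, xApprox_succ, G_succ]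
      simp only [map_add, map_sub, map_mul, map_ofNat, Matrix.cons_val] at hu ⊢
      linear_combination -hu

lemma trace_toRootExt_mem (hq : q * algebraMap R3 S (2 * X 0 - X 1) = 0) {n : ℕ} {J : Ideal S}
    (hξ : xApprox q n ∈ J) (hv : algebraMap R3 S (G n 1) ∈ J) (hw : algebraMap R3 S (G n 2) ∈ J)
    {z : P4} (hz : z ∈ {X 1 * (X 2 + X 3 - 4 * X 0)} ∪ Set.range (Rv n)) :
    trace (toRootExt q z) ∈ J ∧ trace (omega * toRootExt q z) ∈ J := by
  obtain ⟨hx, hstar, hy, hωy⟩ := toRootExt_Rv hq n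
  have hωy_mem : trace (omega * toRootExt q (Rv n 1)) ∈ J := by
    rw [hωy, map_add, map_mul]
    exact sub_mem (add_mem hv (J.mul_mem_left _ hw)) (J.mul_mem_left _ hξ)
  obtain rfl | ⟨i, rfl⟩ := hz
  · have hrel : toRootExt q (X 1 * (X 2 + X 3 - 4 * X 0)) = 0 := by
      have hq' := congrArg (algebraMap S (RootExt q)) hq
      simp only [map_mul, map_sub, map_ofNat, map_zero, ← omega_add_star_omega] at hq'
      simp only [toRootExt, map_mul, map_add, map_sub, map_ofNat, aeval_X, Matrix.cons_val]
      linear_combination -hq'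
    simp [hrel]
  · fin_cases i
    · simp [hx, trace_omega_mul_algebraMap, J.mul_mem_left _ hξ]
    · simp [hy, hw, hωy_mem]
    · simp only [Fin.reduceFinMk, hstar, QuadraticAlgebra.trace_star, trace_omega_mul_star, hy]
      exact ⟨hw, sub_mem (J.mul_mem_left _ hw) hωy_mem⟩

lemma algebraMap_mem_span_of_φ_mem [IsScalarTower ℂ R3 S]
    (hq : q * algebraMap R3 S (2 * X 0 - X 1) = 0) {n : ℕ} {a : R3}
    (h : φ a ∈ Ideal.span ({X 1 * (X 2 + X 3 - 4 * X 0)} ∪ Set.range (Rv n))) :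
    algebraMap R3 S a ∈
      Ideal.span {xApprox q n, algebraMap R3 S (G n 1), algebraMap R3 S (G n 2)} := by
  have hmem := Ideal.mem_map_of_mem (toRootExt q) h
  simp only [Ideal.map_span, toRootExt_φ, IsScalarTower.algebraMap_apply R3 S (RootExt q)] at hmem
  have htrace : trace (algebraMap S (RootExt q) (algebraMap R3 S a)) ∈
      Ideal.span {xApprox q n, algebraMap R3 S (G n 1), algebraMap R3 S (G n 2)} :=
    trace_mem_of_mem_span (Set.forall_mem_image.2 fun z ↦ trace_toRootExt_mem hq
      (Ideal.subset_span (by simp)) (Ideal.subset_span (by simp))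
      (Ideal.subset_span (by simp))) hmem
  rw [QuadraticAlgebra.trace_algebraMap] at htrace
  have htwo : IsUnit (2 : S) := by
    simpa [map_ofNat] using (IsUnit.mk0 (2 : ℂ) two_ne_zero).map (algebraMap ℂ S)
  exact (Ideal.unit_mul_mem_iff_mem _ htwo).1 htrace

end Descent

section FirstOrder

variable {R : Type*} [CommRing R]

/-- `R[q]` modulo `q²` and `q d`, where `q` is `inr 1`. -/
abbrev FirstOrderExt (d : R) : Type _ := TrivSqZeroExt R (R ⧸ Ideal.span {d})

lemma inr_one_mul_algebraMap (d r : R) :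
    (TrivSqZeroExt.inr 1 : FirstOrderExt d) * algebraMap R _ r =
      TrivSqZeroExt.inr (Ideal.Quotient.mk _ r) := by
  rw [TrivSqZeroExt.algebraMap_eq_inl, TrivSqZeroExt.inr_mul_inl, op_smul_eq_smul,
    Algebra.smul_def, mul_one, Ideal.Quotient.algebraMap_eq]

lemma exists_mul_mem_of_algebraMap_mem_span {d x l v w a : R}
    (h : algebraMap R (FirstOrderExt d) a ∈ Ideal.span
      {algebraMap R _ x + TrivSqZeroExt.inr 1 * algebraMap R _ l, algebraMap R _ v,
        algebraMap R _ w}) :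
    ∃ α, α * l ∈ Ideal.span (Set.range ![d, w, v, x]) ∧ a - α * x ∈ Ideal.span {v, w} := by
  obtain ⟨α, β, γ, hsum⟩ := Submodule.mem_span_triple.1 h
  obtain ⟨α', hα⟩ := Ideal.Quotient.mk_surjective α.snd
  obtain ⟨β', hβ⟩ := Ideal.Quotient.mk_surjective β.snd
  obtain ⟨γ', hγ⟩ := Ideal.Quotient.mk_surjective γ.snd
  rw [inr_one_mul_algebraMap] at hsum
  have hfst := congrArg TrivSqZeroExt.fst hsum
  have hsnd := congrArg TrivSqZeroExt.snd hsum
  simp only [TrivSqZeroExt.algebraMap_eq_inl, smul_eq_mul, TrivSqZeroExt.fst_add,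
    TrivSqZeroExt.fst_mul, TrivSqZeroExt.fst_inl, TrivSqZeroExt.fst_inr, add_zero,
    TrivSqZeroExt.snd_add, TrivSqZeroExt.snd_mul, TrivSqZeroExt.snd_inl, TrivSqZeroExt.snd_inr,
    zero_add, Algebra.smul_def, Ideal.Quotient.algebraMap_eq, ← map_mul, ← hα, ← hβ, ← hγ,
    op_smul_eq_smul, ← map_add, mul_zero, Ideal.Quotient.eq_zero_iff_mem] at hfst hsnd
  obtain ⟨δ, hδ⟩ := Ideal.mem_span_singleton'.1 hsnd
  refine ⟨α.fst, ?_, ?_⟩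
  · rw [Ideal.mem_span_range_iff_exists_fun]
    refine ⟨![δ, -γ', -β', -α'], ?_⟩
    simp only [Fin.sum_univ_four, Matrix.cons_val]
    linear_combination hδ
  · rw [Ideal.mem_span_pair]
    exact ⟨β.fst, γ.fst, by linear_combination hfst⟩

end FirstOrder

/-- The ideal `(t - 2b, w_{n+1}, v_{n+1}, b^{n+1})`. It contains `αℓ_n` whenever
`a ≡ αb^{n+1}` modulo `(v_{n+1}, w_{n+1})` arises from a membership of `φ(a)`. -/
def qCoeffIdeal (n : ℕ) : Ideal R3 :=
  Ideal.span (Set.range ![X 1 - 2 * X 0, G n 2, G n 1, X 0 ^ (n + 1)])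

lemma exists_mul_qCoeff_mem {n : ℕ} {a : R3}
    (h : φ a ∈ Ideal.span ({X 1 * (X 2 + X 3 - 4 * X 0)} ∪ Set.range (Rv n))) :
    ∃ α, α * qCoeff n ∈ qCoeffIdeal n ∧
      a - α * X 0 ^ (n + 1) ∈ Ideal.span {G n 1, G n 2} := by
  have hq : (TrivSqZeroExt.inr 1 : FirstOrderExt (X 1 - 2 * X 0 : R3)) *
      algebraMap R3 _ (2 * X 0 - X 1) = 0 := by
    rw [inr_one_mul_algebraMap, Ideal.Quotient.eq_zero_iff_mem.2, TrivSqZeroExt.inr_zero]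
    exact Ideal.mem_span_singleton'.2 ⟨-1, by ring⟩
  apply exists_mul_mem_of_algebraMap_mem_span
  simpa only [xApprox, map_pow] using algebraMap_mem_span_of_φ_mem hq h

section Graded

variable {σ R : Type*} [CommSemiring R] {w : σ → ℕ}

lemma weightedHomogeneousComponent_mul_of_isWeightedHomogeneous
    {g : MvPolynomial σ R} {d : ℕ} (hg : IsWeightedHomogeneous w g d)
    (f : MvPolynomial σ R) (p : ℕ) :
    weightedHomogeneousComponent w p (f * g) =
      if d ≤ p then weightedHomogeneousComponent w (p - d) f * g else 0 := by
  let := weightedGradedAlgebra R w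
  have h := DirectSum.coe_decompose_mul_of_right_mem (weightedHomogeneousSubmodule R w) (a := f) p
    ((mem_weightedHomogeneousSubmodule R w d g).2 hg)
  rw [← weightedDecomposition.decompose'_apply, ← weightedDecomposition.decompose'_apply]
  exact h

lemma exists_weightedHomogeneousComponent_eq_sum {ι : Type*} [Fintype ι] {d : ι → ℕ}
    {g : ι → MvPolynomial σ R} (hg : ∀ i, IsWeightedHomogeneous w (g i) (d i))
    {f : MvPolynomial σ R} (hf : f ∈ Ideal.span (Set.range g)) (p : ℕ) :
    ∃ c : ι → MvPolynomial σ R, (∀ i, IsWeightedHomogeneous w (c i) (p - d i)) ∧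
      (∀ i, p < d i → c i = 0) ∧ weightedHomogeneousComponent w p f = ∑ i, c i * g i := by
  obtain ⟨c, rfl⟩ := Ideal.mem_span_range_iff_exists_fun.1 hf
  refine ⟨fun i ↦ if d i ≤ p then weightedHomogeneousComponent w (p - d i) (c i) else 0,
    fun i ↦ ?_, fun i hi ↦ if_neg hi.not_ge, ?_⟩
  · dsimp only
    split_ifs
    · exact weightedHomogeneousComponent_isWeightedHomogeneous _ _
    · exact isWeightedHomogeneous_zero _ _ _
  · simp only [map_sum, weightedHomogeneousComponent_mul_of_isWeightedHomogeneous (hg _),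
      ite_mul, zero_mul]

lemma eq_single_of_weight_eq_one (hw : ∀ i, w i ≠ 0) {d : σ →₀ ℕ}
    (hd : Finsupp.weight w d = 1) : ∃ i, w i = 1 ∧ d = Finsupp.single i 1 := by
  have hd0 : d ≠ 0 := by
    rintro rfl
    simp at hd
  obtain ⟨i, hi⟩ := Finsupp.ne_iff.1 hd0
  obtain ⟨e, rfl⟩ : ∃ e, d = Finsupp.single i 1 + e :=
    le_iff_exists_add.1 (Finsupp.single_le_iff.2 (Nat.one_le_iff_ne_zero.2 hi))
  rw [map_add, Finsupp.weight_single, one_smul] at hd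
  have hwi := hw i
  have he : e = 0 := by
    ext j
    have hj := Finsupp.le_weight w (hw j) e
    rw [Finsupp.zero_apply]
    omega
  refine ⟨i, by omega, by rw [he, add_zero]⟩

lemma exists_eq_sum_of_isWeightedHomogeneous_one [Fintype σ] (hw : ∀ i, w i ≠ 0)
    {f : MvPolynomial σ R} (hf : IsWeightedHomogeneous w f 1) :
    ∃ c : σ → R, (∀ i, w i ≠ 1 → c i = 0) ∧ f = ∑ i, C (c i) * X i := by
  classical
  refine ⟨fun i ↦ coeff (Finsupp.single i 1) f, fun i hi ↦ hf.coeff_eq_zero _ (by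
    rwa [Finsupp.weight_single, one_smul]), ?_⟩
  ext d
  simp only [coeff_sum, coeff_C_mul, coeff_X, mul_ite, mul_one, mul_zero]
  by_cases hd : Finsupp.weight w d = 1
  · obtain ⟨i, -, rfl⟩ := eq_single_of_weight_eq_one hw hd
    simp [Finsupp.single_left_inj]
  · rw [hf.coeff_eq_zero d hd, Finset.sum_eq_zero]
    intro i _
    split_ifs with hi
    · rw [hi, hf.coeff_eq_zero d hd]
    · rfl

lemma isWeightedHomogeneous_ofNat (w : σ → ℕ) (m : ℕ) [m.AtLeastTwo] :
    IsWeightedHomogeneous w (ofNat(m) : MvPolynomial σ R) 0 := by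
  rw [← map_ofNat (C : R →+* MvPolynomial σ R)]
  exact isWeightedHomogeneous_C _ _

end Graded

section Weights

/-- The weights of `b`, `t`, `k`. -/
local notation "wt" => (![1, 1, 2] : Fin 3 → ℕ)

lemma isWeightedHomogeneous_X_zero : IsWeightedHomogeneous wt (X 0 : R3) 1 :=
  isWeightedHomogeneous_X ℂ wt 0

lemma isWeightedHomogeneous_X_one : IsWeightedHomogeneous wt (X 1 : R3) 1 :=
  isWeightedHomogeneous_X ℂ wt 1

lemma isWeightedHomogeneous_X_two : IsWeightedHomogeneous wt (X 2 : R3) 2 :=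
  isWeightedHomogeneous_X ℂ wt 2

lemma isWeightedHomogeneous_two_mul_X_zero : IsWeightedHomogeneous wt (2 * X 0 : R3) 1 := by
  simpa only [zero_add] using (isWeightedHomogeneous_ofNat wt 2).mul isWeightedHomogeneous_X_zero

lemma isWeightedHomogeneous_X_zero_pow (n : ℕ) : IsWeightedHomogeneous wt (X 0 ^ n : R3) n := by
  simpa only [smul_eq_mul, mul_one] using isWeightedHomogeneous_X_zero.pow n

lemma isWeightedHomogeneous_G (n : ℕ) :
    IsWeightedHomogeneous wt (G n 0) (n + 2) ∧ IsWeightedHomogeneous wt (G n 1) (n + 1) ∧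
      IsWeightedHomogeneous wt (G n 2) n := by
  induction n with
  | zero =>
    have h := isWeightedHomogeneous_two_mul_X_zero.sub isWeightedHomogeneous_X_one
    simp only [G_zero, G1, Matrix.cons_val]
    exact ⟨isWeightedHomogeneous_X_zero.mul h, h, isWeightedHomogeneous_ofNat wt 2⟩
  | succ n ih =>
    obtain ⟨hu, hv, hw⟩ := ih
    have hbu := isWeightedHomogeneous_X_zero.mul hu
    have hkw := isWeightedHomogeneous_X_two.mul hw
    have htw := isWeightedHomogeneous_X_one.mul hw
    rw [add_comm] at hbu hkw htw
    simp only [G_succ, Matrix.cons_val]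
    exact ⟨hbu, hu.add hkw, hv.add htw⟩

lemma isWeightedHomogeneous_qCoeff_succ (n : ℕ) :
    IsWeightedHomogeneous wt (qCoeff (n + 1)) n := by
  induction n with
  | zero =>
    simpa [qCoeff, G_zero, G1] using
      (isWeightedHomogeneous_ofNat wt 2).mul (isWeightedHomogeneous_ofNat wt 2)
  | succ n ih =>
    have hb := isWeightedHomogeneous_X_zero.mul ih
    have hw := (isWeightedHomogeneous_ofNat wt 2).mul (isWeightedHomogeneous_G (n + 1)).2.2
    rw [add_comm 1 n] at hb
    rw [zero_add] at hw
    exact hb.add hw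

lemma eval_zero_G_two_qCoeff (n : ℕ) :
    eval ![1, 2, 0] (G n 2) = (2 : ℂ) ^ (n + 1) ∧
      eval ![1, 2, 0] (qCoeff n) = (2 : ℂ) ^ (n + 2) - 4 := by
  suffices h : eval ![1, 2, 0] (G n 1) = (0 : ℂ) ∧ eval ![1, 2, 0] (G n 2) = (2 : ℂ) ^ (n + 1) ∧
      eval ![1, 2, 0] (qCoeff n) = (2 : ℂ) ^ (n + 2) - 4 from h.2
  induction n with
  | zero =>
    simp only [G_zero, G1, qCoeff, Matrix.cons_val]
    norm_num
  | succ n ih =>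
    obtain ⟨hv, hw, hl⟩ := ih
    simp only [G_succ, G_apply_zero, qCoeff, map_add, map_sub, map_mul, map_pow, map_ofNat, eval_X,
      hv, hw, hl, Matrix.cons_val]
    refine ⟨?_, ?_, ?_⟩ <;> ring

lemma eval_neg_one_G_two_qCoeff (n : ℕ) :
    eval ![1, 2, -1] (G n 2) = 2 * ((n : ℂ) + 1) ∧
      eval ![1, 2, -1] (qCoeff n) = 2 * (n : ℂ) * (n + 1) := by
  suffices h : eval ![1, 2, -1] (G n 1) = -2 * (n : ℂ) ∧
      eval ![1, 2, -1] (G n 2) = 2 * ((n : ℂ) + 1) ∧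
      eval ![1, 2, -1] (qCoeff n) = 2 * (n : ℂ) * (n + 1) from h.2
  induction n with
  | zero =>
    simp only [G_zero, G1, qCoeff, Matrix.cons_val]
    norm_num
  | succ n ih =>
    obtain ⟨hv, hw, hl⟩ := ih
    simp only [G_succ, G_apply_zero, qCoeff, map_add, map_sub, map_mul, map_pow, map_ofNat, eval_X,
      hv, hw, hl, Matrix.cons_val]
    push_cast
    refine ⟨?_, ?_, ?_⟩ <;> ring

lemma eq_mul_of_forall_mul_eval_qCoeff_eq {n : ℕ} {c β : ℂ}
    (h : ∀ κ, c * eval ![1, 2, κ] (qCoeff n) = β * eval ![1, 2, κ] (G n 2)) : β = n * c := by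
  have h' := h (-1)
  rw [(eval_neg_one_G_two_qCoeff n).1, (eval_neg_one_G_two_qCoeff n).2] at h'
  exact mul_left_cancel₀ (Nat.cast_add_one_ne_zero n) (by linear_combination -h' / 2)

lemma mul_two_pow_add_four_ne {n : ℕ} (hn : 2 ≤ n) : (n : ℂ) * 2 ^ (n + 1) + 4 ≠ 2 ^ (n + 2) := by
  norm_cast
  have := Nat.mul_le_mul_right (2 ^ (n + 1)) hn
  rw [pow_succ 2 (n + 1)]
  omega

lemma eq_zero_of_forall_mul_eval_qCoeff_eq {n : ℕ} (hn : 2 ≤ n) {c β : ℂ}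
    (h : ∀ κ, c * eval ![1, 2, κ] (qCoeff n) = β * eval ![1, 2, κ] (G n 2)) : c = 0 := by
  have h' := h 0
  rw [(eval_zero_G_two_qCoeff n).1, (eval_zero_G_two_qCoeff n).2,
    eq_mul_of_forall_mul_eval_qCoeff_eq h] at h'
  have hprod : c * (n * 2 ^ (n + 1) + 4 - 2 ^ (n + 2)) = 0 := by linear_combination -h'
  exact (mul_eq_zero.1 hprod).resolve_right (sub_ne_zero.2 (mul_two_pow_add_four_ne hn))

lemma exists_eval_component_mul_qCoeff_eq {n d : ℕ} (hd : d ≤ 1) {α : R3}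
    (h : α * qCoeff (n + 1) ∈ qCoeffIdeal (n + 1)) :
    ∃ β : ℂ, (d = 0 → β = 0) ∧ ∀ κ,
      eval ![1, 2, κ] (weightedHomogeneousComponent wt d α) * eval ![1, 2, κ] (qCoeff (n + 1)) =
        β * eval ![1, 2, κ] (G (n + 1) 2) := by
  obtain ⟨-, hv, hw⟩ := isWeightedHomogeneous_G (n + 1)
  have hgen : ∀ i, IsWeightedHomogeneous wt
      ((![X 1 - 2 * X 0, G (n + 1) 2, G (n + 1) 1, X 0 ^ (n + 2)] : Fin 4 → R3) i)
      ((![1, n + 1, n + 2, n + 2] : Fin 4 → ℕ) i) := by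
    simp only [Fin.forall_fin_succ]
    exact ⟨isWeightedHomogeneous_X_one.sub isWeightedHomogeneous_two_mul_X_zero, hw, hv,
      isWeightedHomogeneous_X_zero_pow _, by simp⟩
  obtain ⟨c, hc, hc0, hsum⟩ := exists_weightedHomogeneousComponent_eq_sum hgen h (n + d)
  rw [weightedHomogeneousComponent_mul_of_isWeightedHomogeneous
    (isWeightedHomogeneous_qCoeff_succ n), if_pos (Nat.le_add_right n d),
    Nat.add_sub_cancel_left] at hsum
  have hc₁ : IsWeightedHomogeneous wt (c 1) 0 := by
    simpa [show n + d - (n + 1) = 0 by omega] using hc 1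
  have hc₁C : c 1 = C (coeff 0 (c 1)) := by
    rw [← weightedHomogeneousComponent_zero (w := wt) _ (by decide),
      hc₁.weightedHomogeneousComponent_same]
  have hc₂ : c 2 = 0 := hc0 2 (show n + d < n + 2 by omega)
  have hc₃ : c 3 = 0 := hc0 3 (show n + d < n + 2 by omega)
  refine ⟨coeff 0 (c 1), fun hd0 ↦ ?_, fun κ ↦ ?_⟩
  · rw [hc0 1 (show n + d < n + 1 by omega), coeff_zero]
  · have heval := congrArg (eval ![1, 2, κ]) hsum
    rw [Fin.sum_univ_four, hc₁C, hc₂, hc₃] at heval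
    simpa using heval

lemma component_zero_eq_zero {n : ℕ} {α : R3}
    (h : α * qCoeff (n + 1) ∈ qCoeffIdeal (n + 1)) :
    weightedHomogeneousComponent wt 0 α = 0 := by
  obtain ⟨β, hβ, heval⟩ := exists_eval_component_mul_qCoeff_eq zero_le_one h
  rw [weightedHomogeneousComponent_zero _ (by decide)] at heval ⊢
  simp only [hβ rfl, eval_C, zero_mul] at heval
  have hmul : ((n + 1 : ℕ) : ℂ) * coeff 0 α = 0 :=
    (eq_mul_of_forall_mul_eval_qCoeff_eq fun κ ↦ (heval κ).trans (zero_mul _).symm).symm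
  rw [(mul_eq_zero.1 hmul).resolve_left (Nat.cast_ne_zero.2 n.succ_ne_zero), C_0]

lemma linear_mul_X_zero_sq_mem (c₁ c₂ : ℂ) :
    (C c₁ * X 0 + C c₂ * X 1) * X 0 ^ 2 ∈ Ideal.span {G 1 0, G 1 1, G 1 2} := by
  have hw : G 1 2 = 2 * X 0 + X 1 := by
    simp only [G_succ, G_zero, G1, Matrix.cons_val]
    ring
  have h₁ : C c₁ = (4 * C (c₁ / 4) : R3) := by
    rw [← map_ofNat C, ← C_mul, mul_div_cancel₀ _ (by norm_num)]
  have h₂ : C c₂ = (2 * C (c₂ / 2) : R3) := by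
    rw [← map_ofNat C, ← C_mul, mul_div_cancel₀ _ two_ne_zero]
  refine Submodule.mem_span_triple.2 ⟨C (c₁ / 4 - c₂ / 2), 0, C (c₁ / 4 + c₂ / 2) * X 0 ^ 2, ?_⟩
  simp only [hw, G_apply_zero, h₁, h₂, smul_eq_mul, map_sub, map_add]
  ring

lemma component_one_mul_X_zero_pow_mem {n : ℕ} {α : R3}
    (h : α * qCoeff (n + 1) ∈ qCoeffIdeal (n + 1)) :
    weightedHomogeneousComponent wt 1 α * X 0 ^ (n + 2) ∈
      Ideal.span {G (n + 1) 0, G (n + 1) 1, G (n + 1) 2} := by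
  obtain ⟨β, -, heval⟩ := exists_eval_component_mul_qCoeff_eq le_rfl h
  obtain ⟨c, hc, hα⟩ := exists_eq_sum_of_isWeightedHomogeneous_one (by decide)
    (weightedHomogeneousComponent_isWeightedHomogeneous (w := wt) 1 α)
  rw [Fin.sum_univ_three, hc 2 (by decide), C_0, zero_mul, add_zero] at hα
  simp only [hα] at heval ⊢
  obtain rfl | hn := n.eq_zero_or_pos
  · exact linear_mul_X_zero_sq_mem (c 0) (c 1)
  · have hc₀ : c 0 + c 1 * 2 = 0 := by
      refine eq_zero_of_forall_mul_eval_qCoeff_eq (Nat.succ_le_succ hn) (β := β) fun κ ↦ ?_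
      simpa using heval κ
    have hmul : (C (c 0) * X 0 + C (c 1) * X 1) * X 0 ^ (n + 2) = C (-c 1) * G (n + 1) 0 := by
      rw [eq_neg_of_add_eq_zero_left hc₀, G_apply_zero]
      simp only [map_neg, map_mul, map_ofNat]
      ring
    rw [hmul]
    exact Ideal.mul_mem_left _ _ (Ideal.subset_span (by simp))

lemma component_mul_X_zero_pow_mem {n p : ℕ} (hp : p ≤ n + 3) {α : R3}
    (h : α * qCoeff (n + 1) ∈ qCoeffIdeal (n + 1)) :
    weightedHomogeneousComponent wt p (α * X 0 ^ (n + 2)) ∈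
      Ideal.span {G (n + 1) 0, G (n + 1) 1, G (n + 1) 2} := by
  rw [weightedHomogeneousComponent_mul_of_isWeightedHomogeneous
    (isWeightedHomogeneous_X_zero_pow (n + 2))]
  split_ifs with hnp
  · obtain hd | hd : p - (n + 2) = 0 ∨ p - (n + 2) = 1 := by omega
    · rw [hd, component_zero_eq_zero h, zero_mul]
      exact zero_mem _
    · rw [hd]
      exact component_one_mul_X_zero_pow_mem h
  · exact zero_mem _

lemma component_mem_span_pair {n : ℕ} (p : ℕ) {f : R3} (hf : f ∈ Ideal.span {G n 1, G n 2}) :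
    weightedHomogeneousComponent wt p f ∈ Ideal.span {G n 1, G n 2} := by
  let := weightedGradedAlgebra ℂ wt
  obtain ⟨-, hv, hw⟩ := isWeightedHomogeneous_G n
  refine weightedHomogeneousComponent_mem_of_mem ℂ wt (Ideal.homogeneous_span _ _ ?_) hf p
  rintro _ (rfl | rfl)
  · exact ⟨n + 1, hv⟩
  · exact ⟨n, hw⟩

theorem stmt15_general (n : ℕ) (hn : 1 ≤ n) (p : ℕ) (hp : p ≤ n + 2) (a : R3)
    (h : φ a ∈ Ideal.span ({X 1 * (X 2 + X 3 - 4 * X 0)} ∪ Set.range (Rv n))) :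
    weightedHomogeneousComponent wt p a ∈ Ideal.span {G n 0, G n 1, G n 2} := by
  obtain ⟨m, rfl⟩ := Nat.exists_eq_add_of_le' hn
  obtain ⟨α, hα, hrem⟩ := exists_mul_qCoeff_mem h
  rw [← sub_add_cancel a (α * X 0 ^ (m + 2)), map_add]
  exact add_mem (Ideal.span_mono (Set.subset_insert _ _) (component_mem_span_pair p hrem))
    (component_mul_X_zero_pow_mem hp hα)

end Weights

/-- Grade `ℂ[b,t,k]` by `deg b = deg t = 1`, `deg k = 2`, and
`ℂ[b,q,r₁,r₂]` by `deg b = deg r₁ = deg r₂ = 1`, `deg q = 2`.  For `n ≥ 1` and every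
homogeneous `a ∈ ℂ[b,t,k]` of degree `p ≤ n+2`: if `φ(a)` lies in the ideal
`(q(r₁+r₂−4b), x_{n+1}, y_{n+1}, z_{n+1})` of `ℂ[b,q,r₁,r₂]`, then `a` lies in the ideal
`(u_{n+1}, v_{n+1}, w_{n+1})` of `ℂ[b,t,k]`; i.e. the induced map of graded quotients is
injective in degrees `≤ n+2`. -/
theorem stmt15 (n : ℕ) (hn : 1 ≤ n) (p : ℕ) (hp : p ≤ n + 2) (a : R3)
    (ha : IsWeightedHomogeneous ![1, 1, 2] a p)
    (h : φ a ∈ Ideal.span ({X 1 * (X 2 + X 3 - 4 * X 0)} ∪ Set.range (Rv n))) :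
    a ∈ Ideal.span {G n 0, G n 1, G n 2} := by
  rw [← ha.weightedHomogeneousComponent_same]
  exact stmt15_general n hn p hp a h

end
end

section
/- The composite of φ with the quotient map ℂ[b,q,r₁,r₂] → ℂ[b,q,r₁,r₂]/(q(r₁+r₂−4b)) is an injective ℂ-algebra homomorphism ℂ[b,t,k] → ℂ[b,q,r₁,r₂]/(q(r₁+r₂−4b)). -/
open MvPolynomial

noncomputable section

/-- The principal ideal `(q(r₁+r₂−4b))` of `ℂ[b,q,r₁,r₂]`. -/
def J : Ideal P4 := Ideal.span {X 1 * (X 2 + X 3 - 4 * X 0)}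

/-!
Modulo `q`, the images of `t` and `k` are the sum and minus the product of `r₁ - b` and `r₂ - b`,
so these two elements are the roots of `T² - tT - k`. Over `A = R[b,t,k]` this polynomial acquires
a root `ω` in the free quadratic extension `A[ω]` of `A`, and `q ↦ 0`, `r₁ ↦ b + ω`,
`r₂ ↦ b + (t - ω)` defines a map to `A[ω]` that kills `q` and whose composite with `φ` is the
inclusion of `A`.
-/

lemma injective_mkₐ_comp_of_injective_comp {R A B C : Type*} [CommSemiring R] [Semiring A]
    [Ring B] [Semiring C] [Algebra R A] [Algebra R B] [Algebra R C] {I : Ideal B} [I.IsTwoSided]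
    {f : A →ₐ[R] B} {g : B →ₐ[R] C} (hI : I ≤ RingHom.ker g)
    (hgf : Function.Injective (g.comp f)) :
    Function.Injective ((Ideal.Quotient.mkₐ R I).comp f) := by
  rw [← Ideal.Quotient.liftₐ_comp I g hI, AlgHom.comp_assoc, AlgHom.coe_comp] at hgf
  exact hgf.of_comp

section CommRing

open QuadraticAlgebra

variable (R : Type*) [CommRing R]

/-- The homomorphism `φ` with coefficients in an arbitrary commutative ring `R`; the variables of
`R[b,t,k]` and `R[b,q,r₁,r₂]` are numbered as in `R3` and `P4`. -/
def φOver : MvPolynomial (Fin 3) R →ₐ[R] MvPolynomial (Fin 4) R :=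
  aeval ![X 0, X 2 + X 3 - 2 * X 0, 4 * X 1 - (X 0 - X 2) * (X 0 - X 3)]

lemma aeval_comp_φOver {S : Type*} [CommRing S] [Algebra R S] (b u v : S) :
    (aeval ![b, 0, b + u, b + v]).comp (φOver R) = aeval ![b, u + v, -(u * v)] := by
  ext i
  fin_cases i
  · simp [φOver]
  · have ht : b + u + (b + v) - 2 * b = u + v := by ring
    simpa [φOver] using ht
  · simp [φOver]

/-- The extension `A[ω]` of `A = R[b,t,k]` by a root `ω` of `T² - tT - k`; the other root is
`t - ω`. -/
abbrev RootExtension : Type _ :=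
  QuadraticAlgebra (MvPolynomial (Fin 3) R) (X 2) (X 1)

/-- The evaluation `R[b,q,r₁,r₂] → A[ω]` at a point with `q = 0` of the fibre of
`φOver R` over the generic point `(b, t, k)`; its `r₁` and `r₂` are `b` plus the roots. -/
def evalRoots : MvPolynomial (Fin 4) R →ₐ[R] RootExtension R :=
  let a := algebraMap (MvPolynomial (Fin 3) R) (RootExtension R)
  aeval ![a (X 0), 0, a (X 0) + ω, a (X 0) + (a (X 1) - ω)]

lemma evalRoots_comp_φOver :
    (evalRoots R).comp (φOver R) =
      IsScalarTower.toAlgHom R (MvPolynomial (Fin 3) R) (RootExtension R) := by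
  let a := algebraMap (MvPolynomial (Fin 3) R) (RootExtension R)
  have ht : ω + (a (X 1) - ω) = a (X 1) := add_sub_cancel _ _
  have hk : -(ω * (a (X 1) - ω)) = a (X 2) := by
    have hω : (ω : RootExtension R) * ω = a (X 2) + a (X 1) * ω :=
      omega_mul_omega_eq_algebraMap
    linear_combination hω
  rw [evalRoots, aeval_comp_φOver, ht, hk]
  ext1 i
  fin_cases i <;> simp [a]

lemma span_X_one_le_ker_evalRoots : Ideal.span {X 1} ≤ RingHom.ker (evalRoots R) := by
  simp [Ideal.span_le, evalRoots]

end CommRing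

theorem stmt16_general (R : Type*) [CommRing R] {I : Ideal (MvPolynomial (Fin 4) R)}
    (hI : I ≤ Ideal.span {X 1}) :
    Function.Injective ((Ideal.Quotient.mkₐ R I).comp (φOver R)) := by
  refine injective_mkₐ_comp_of_injective_comp (hI.trans (span_X_one_le_ker_evalRoots R)) ?_
  rw [evalRoots_comp_φOver]
  exact QuadraticAlgebra.algebraMap_injective

/-- The composite of `φ` with the quotient map
`ℂ[b,q,r₁,r₂] → ℂ[b,q,r₁,r₂]/(q(r₁+r₂−4b))` is an injective `ℂ`-algebra homomorphism
`ℂ[b,t,k] → ℂ[b,q,r₁,r₂]/(q(r₁+r₂−4b))`. -/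
theorem stmt16 :
    Function.Injective ((Ideal.Quotient.mkₐ ℂ J).comp φ) :=
  stmt16_general ℂ (Ideal.span_singleton_le_span_singleton.2 (dvd_mul_right _ _))

end
end
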